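/- Let k ≥ 2 and ℓ be fixed integers with 1 ≤ ℓ < k and gcd(ℓ, k) = 1. Then there exists a constant C > 0 (depending on k) such that for all real x ≥ 16, |#{n ≤ x : ω(n) ≥ 2 and P₂(n) ≡ ℓ (mod k)} − x/φ(k)| ≤ C · x · (log log x)² / log x. In particular, the sequence P₂(n) of second largest prime factors is uniformly distributed among the reduced residue classes modulo k. -/

import Mathlib

open Finset Real

/-- The second largest distinct prime factor of `n`: the largest prime factor of `n`
strictly less than `P(n)`, defined when `ω(n) ≥ 2` (junk value `1` otherwise). -/
def secondLargestPrimeFac (n : ℕ) : ℕ :=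
  ((n.primeFactors.sort (· ≤ ·)).reverse).getD 1 1

open scoped ArithmeticFunction.vonMangoldt

/-! Let `f` be the indicator of the class `ℓ` mod `k` minus its density `1/φ(k)` on the reduced
classes. Since `L(1, χ) ≠ 0` for `χ ≠ 1`, the sums of `f(p)/p` over the primes `p` of `[a, b)` are
`O(1/log a)`; this is all that is used about primes in arithmetic progressions.

Write `n = q p m` with `q = P(n)`, `p = P₂(n)` and `m` a `p`-smooth integer, which is possible
unless `ω(n) < 2` or `P(n)² ∣ n`; such `n ≤ x` number `O(x log log x / log x)`. The sum of
`f(P₂(n))` is then the sum over the primes `q` of `x/q` times a mean over the integers below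
`w = x/q`, in which `p` carries the weight `f(p)/p` times the density of `p`-smooth integers below
`w/p`. Counting `∑ log n` over smooth `n` shows that this density varies by only `O(1/i)` when `p`
runs over `[2^i, 2^(i+1))`, so summation by parts over the dyadic blocks with `i ≥ a` bounds their
contribution by `O(1/a)`, and what is left is at most the density of `2^a`-smooth integers. For
`a ≍ log w / log log x` the mean is `O(log log x / (1 + log w))`, and summing
`1 / (q (1 + log (x/q)))` over the primes `q ≤ x` costs another `O(log log x / log x)`.
-/

section FiniteSums

theorem sum_Ico_smul_eq_smul_sum_add {R M : Type*} [CommRing R] [AddCommGroup M] [Module R M]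
    (g : ℕ → R) (e : ℕ → M) {a b : ℕ} (hab : a ≤ b) :
    ∑ n ∈ Ico a b, g n • e n =
      g a • ∑ n ∈ Ico a b, e n + ∑ n ∈ Ico a b, (g (n + 1) - g n) • ∑ i ∈ Ico (n + 1) b, e i := by
  induction b, hab using Nat.le_induction with
  | base => simp
  | succ b hab ih =>
    have htail : ∑ n ∈ Ico a b, (g (n + 1) - g n) • ∑ i ∈ Ico (n + 1) (b + 1), e i =
        ∑ n ∈ Ico a b, (g (n + 1) - g n) • ∑ i ∈ Ico (n + 1) b, e i + (g b - g a) • e b := by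
      rw [← sum_Ico_sub g hab, sum_smul, ← sum_add_distrib]
      refine sum_congr rfl fun n hn ↦ ?_
      rw [sum_Ico_succ_top (Nat.succ_le_of_lt (mem_Ico.1 hn).2), smul_add]
    rw [sum_Ico_succ_top hab, sum_Ico_succ_top hab, sum_Ico_succ_top hab, htail, ih]
    simp only [Ico_self, sum_empty, smul_zero, add_zero]
    module

theorem norm_sum_Ico_le_of_range {E : Type*} [SeminormedAddCommGroup E] {e : ℕ → E} {C : ℝ}
    (h : ∀ N, ‖∑ n ∈ range N, e n‖ ≤ C) (a b : ℕ) : ‖∑ n ∈ Ico a b, e n‖ ≤ 2 * C := by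
  rcases le_total b a with hba | hab
  · rw [Ico_eq_empty_of_le hba, sum_empty, norm_zero]
    linarith [(norm_nonneg _).trans (h 0)]
  · rw [sum_Ico_eq_sub _ hab]
    linarith [norm_sub_le (∑ n ∈ range b, e n) (∑ n ∈ range a, e n), h a, h b]

variable {E : Type*} [SeminormedAddCommGroup E] [NormedSpace ℝ E]

theorem norm_sum_Ico_smul_sub_le (g : ℕ → ℝ) (e : ℕ → E) {a b : ℕ} {r : ℕ → ℝ} (hab : a ≤ b)
    (htail : ∀ n, a ≤ n → ‖∑ i ∈ Ico n b, e i‖ ≤ r n) :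
    ‖∑ n ∈ Ico a b, g n • e n - g a • ∑ n ∈ Ico a b, e n‖ ≤
      ∑ n ∈ Ico a b, |g (n + 1) - g n| * r (n + 1) := by
  rw [sum_Ico_smul_eq_smul_sum_add g e hab, add_sub_cancel_left]
  refine norm_sum_le_of_le _ fun n hn ↦ ?_
  rw [norm_smul, Real.norm_eq_abs]
  exact mul_le_mul_of_nonneg_left (htail _ (by grind)) (abs_nonneg _)

theorem norm_sum_Ico_smul_le_of_antitoneOn {g : ℕ → ℝ} {e : ℕ → E} {a b : ℕ} {r : ℝ}
    (hg : AntitoneOn g (Set.Ici a)) (hg0 : ∀ n, a ≤ n → 0 ≤ g n)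
    (htail : ∀ n, a ≤ n → ‖∑ i ∈ Ico n b, e i‖ ≤ r) :
    ‖∑ n ∈ Ico a b, g n • e n‖ ≤ 2 * r * g a := by
  have hr : 0 ≤ r := (norm_nonneg _).trans (htail a le_rfl)
  rcases le_total b a with hba | hab
  · rw [Ico_eq_empty_of_le hba, sum_empty, norm_zero]
    exact mul_nonneg (by positivity) (hg0 a le_rfl)
  have hvar : ∑ n ∈ Ico a b, |g (n + 1) - g n| = g a - g b := by
    rw [← neg_sub (g b), ← sum_Ico_sub g hab, ← sum_neg_distrib]
    refine sum_congr rfl fun n hn ↦ abs_of_nonpos (sub_nonpos.2 (hg ?_ ?_ n.le_succ)) <;>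
    simp only [Set.mem_Ici] <;> grind
  have hmain := norm_sum_Ico_smul_sub_le g e hab htail
  rw [← sum_mul, hvar] at hmain
  have hhead : ‖g a • ∑ n ∈ Ico a b, e n‖ ≤ g a * r := by
    rw [norm_smul, Real.norm_of_nonneg (hg0 a le_rfl)]
    exact mul_le_mul_of_nonneg_left (htail a le_rfl) (hg0 a le_rfl)
  have hdrop : 0 ≤ g b * r := mul_nonneg (hg0 b hab) hr
  linarith [norm_le_norm_sub_add (∑ n ∈ Ico a b, g n • e n) (g a • ∑ n ∈ Ico a b, e n)]

end FiniteSums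

theorem sum_range_succ_eq_sum_Ioc {M : Type*} [AddCommMonoid M] {f : ℕ → M} (hf : f 0 = 0)
    (N : ℕ) : ∑ n ∈ range (N + 1), f n = ∑ n ∈ Ioc 0 N, f n := by
  rw [range_eq_Ico, sum_eq_sum_Ico_succ_bot (by omega), hf, zero_add]
  exact sum_congr (by ext; simp; omega) fun _ _ ↦ rfl

theorem natCast_div_le_cast_div_add_one (N d : ℕ) : (N : ℝ) / d ≤ ((N / d : ℕ) : ℝ) + 1 := by
  have := (Nat.lt_floor_add_one ((N : ℝ) / d)).le
  rwa [Nat.floor_div_natCast, Nat.floor_natCast] at this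

theorem sum_log_smul_eq_sum_vonMangoldt_smul_mul {R : Type*} [CommRing R] [Algebra ℝ R]
    {h : ℕ → R} (hmul : ∀ m n, h (m * n) = h m * h n) (N : ℕ) :
    ∑ n ∈ Ioc 0 N, log n • h n = ∑ d ∈ Ioc 0 N, Λ d • h d * ∑ m ∈ Ioc 0 (N / d), h m := by
  let u : ArithmeticFunction R := ⟨fun d ↦ Λ d • h d, by simp⟩
  let v : ArithmeticFunction R := ⟨fun m ↦ if m = 0 then 0 else h m, if_pos rfl⟩
  have huv (n : ℕ) : log n • h n = (u * v) n := by
    have hlog : log n = ∑ x ∈ n.divisorsAntidiagonal, Λ x.1 := by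
      rw [Nat.sum_divisorsAntidiagonal fun d _ ↦ Λ d, ArithmeticFunction.vonMangoldt_sum]
    rw [hlog, ArithmeticFunction.mul_apply, sum_smul]
    refine sum_congr rfl fun x hx ↦ ?_
    obtain ⟨hx, hn⟩ := Nat.mem_divisorsAntidiagonal.1 hx
    have hx2 : x.2 ≠ 0 := right_ne_zero_of_mul (hx.trans_ne hn)
    simp only [u, v, ArithmeticFunction.coe_mk, if_neg hx2, smul_mul_assoc, ← hmul, hx]
  have hv (M : ℕ) : ∑ m ∈ Ioc 0 M, v m = ∑ m ∈ Ioc 0 M, h m :=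
    sum_congr rfl fun m hm ↦ if_neg (mem_Ioc.1 hm).1.ne'
  rw [sum_congr rfl fun n _ ↦ huv n, ArithmeticFunction.sum_Ioc_mul_eq_sum_sum]
  simp only [hv]
  rfl

/-! ### Mertens' theorem for the von Mangoldt function -/

theorem sum_vonMangoldt_le (N : ℕ) : ∑ n ∈ Ioc 0 N, Λ n ≤ 6 * N := by
  have hpsi := Chebyshev.psi_le_const_mul_self (x := N) N.cast_nonneg
  rw [Chebyshev.psi, Nat.floor_natCast] at hpsi
  have hlog4 : log 4 = 2 * log 2 := by
    rw [show (4 : ℝ) = 2 ^ 2 by norm_num, log_pow, Nat.cast_ofNat]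
  refine hpsi.trans (mul_le_mul_of_nonneg_right ?_ N.cast_nonneg)
  linarith [log_two_lt_d9]

theorem log_factorial_eq_sum_log (N : ℕ) : log N.factorial = ∑ n ∈ Ioc 0 N, log n := by
  rw [← prod_Ico_id_eq_factorial, Nat.cast_prod, log_prod fun n hn ↦ by simp at hn ⊢; omega]
  exact sum_congr (by ext; simp; omega) fun _ _ ↦ rfl

theorem log_factorial_eq_sum_vonMangoldt (N : ℕ) :
    log N.factorial = ∑ d ∈ Ioc 0 N, Λ d * ((N / d : ℕ) : ℝ) := by
  have := sum_log_smul_eq_sum_vonMangoldt_smul_mul (h := fun _ ↦ (1 : ℝ)) (by simp) N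
  simpa [log_factorial_eq_sum_log] using this

theorem mul_log_sub_le_log_factorial {N : ℕ} (hN : 1 ≤ N) :
    N * log N - N ≤ log N.factorial := by
  have := Stirling.le_log_factorial_stirling (n := N) (by omega)
  have : 0 ≤ log (2 * π) := log_nonneg (by linarith [pi_gt_three])
  have : 0 ≤ log N := log_natCast_nonneg N
  linarith

theorem abs_sum_vonMangoldt_div_sub_log_le {N : ℕ} (hN : 1 ≤ N) :
    |∑ n ∈ Ioc 0 N, Λ n / n - log N| ≤ 6 := by
  have hN' : (0 : ℝ) < N := by exact_mod_cast hN
  have hlower := mul_log_sub_le_log_factorial hN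
  have hupper : log N.factorial ≤ N * log N := by
    rw [← log_pow]
    exact log_le_log (by exact_mod_cast N.factorial_pos) (by exact_mod_cast N.factorial_le_pow)
  rw [log_factorial_eq_sum_vonMangoldt] at hlower hupper
  have hle : ∑ d ∈ Ioc 0 N, Λ d * ((N / d : ℕ) : ℝ) ≤ N * ∑ n ∈ Ioc 0 N, Λ n / n := by
    rw [mul_sum]
    refine sum_le_sum fun d _ ↦ ?_
    calc Λ d * ((N / d : ℕ) : ℝ) ≤ Λ d * (N / d) :=
          mul_le_mul_of_nonneg_left Nat.cast_div_le ArithmeticFunction.vonMangoldt_nonneg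
      _ = N * (Λ d / d) := by ring
  have hge : N * ∑ n ∈ Ioc 0 N, Λ n / n ≤
      ∑ d ∈ Ioc 0 N, Λ d * ((N / d : ℕ) : ℝ) + ∑ d ∈ Ioc 0 N, Λ d := by
    rw [mul_sum, ← sum_add_distrib]
    refine sum_le_sum fun d _ ↦ ?_
    calc N * (Λ d / d) = Λ d * (N / d) := by ring
      _ ≤ Λ d * (((N / d : ℕ) : ℝ) + 1) := mul_le_mul_of_nonneg_left
          (natCast_div_le_cast_div_add_one N d) ArithmeticFunction.vonMangoldt_nonneg
      _ = Λ d * ((N / d : ℕ) : ℝ) + Λ d := by ring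
  have hpsi := sum_vonMangoldt_le N
  rw [← mul_le_mul_iff_right₀ hN', ← abs_of_pos hN', ← abs_mul, abs_of_pos hN', abs_le]
  constructor <;> linarith

theorem sum_vonMangoldt_div_le_log_add {N : ℕ} (hN : 1 ≤ N) :
    ∑ n ∈ Ioc 0 N, Λ n / n ≤ log N + 6 := by
  linarith [(abs_le.1 (abs_sum_vonMangoldt_div_sub_log_le hN)).2]

theorem sum_Ioc_vonMangoldt_div_le {a b : ℕ} (ha : 1 ≤ a) (hab : a ≤ b) :
    ∑ n ∈ Ioc a b, Λ n / n ≤ log (b / a) + 12 := by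
  have hsplit := sum_Ioc_consecutive (fun n : ℕ ↦ Λ n / n) (Nat.zero_le a) hab
  have hA := abs_le.1 (abs_sum_vonMangoldt_div_sub_log_le ha)
  have hB := abs_le.1 (abs_sum_vonMangoldt_div_sub_log_le (ha.trans hab))
  rw [log_div (Nat.cast_ne_zero.2 (by omega)) (Nat.cast_ne_zero.2 (by omega))]
  linarith [hA.1, hB.2]

theorem vonMangoldt_div_nonneg (n : ℕ) : 0 ≤ Λ n / n :=
  div_nonneg ArithmeticFunction.vonMangoldt_nonneg n.cast_nonneg

/-- The sum `∑ Λ(n)/n` over all `n` that are not prime, i.e. over the proper prime powers. -/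
noncomputable def nonprimeVonMangoldtSum : ℝ := ∑' n : ℕ, if ¬n.Prime then Λ n / n else 0

theorem summable_vonMangoldt_div_nonprime :
    Summable fun n : ℕ ↦ if ¬n.Prime then Λ n / n else 0 := by
  have hsummable :=
    ArithmeticFunction.vonMangoldt.summable_residueClass_non_primes_div (q := 1) (a := 0)
  refine hsummable.congr fun n ↦ ?_
  have hmem : n ∈ {m : ℕ | (m : ZMod 1) = 0} := Subsingleton.elim _ _
  rw [ArithmeticFunction.vonMangoldt.residueClass, Set.indicator_of_mem hmem]
  split_ifs <;> simp_all

theorem sum_vonMangoldt_div_nonprime_le (s : Finset ℕ) :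
    ∑ n ∈ s with ¬n.Prime, Λ n / n ≤ nonprimeVonMangoldtSum := by
  rw [sum_filter]
  refine summable_vonMangoldt_div_nonprime.sum_le_tsum s fun n _ ↦ ?_
  split_ifs
  exacts [le_rfl, vonMangoldt_div_nonneg n]

theorem nonprimeVonMangoldtSum_nonneg : 0 ≤ nonprimeVonMangoldtSum := by
  simpa using sum_vonMangoldt_div_nonprime_le ∅

/-! ### Dirichlet characters: Mertens' theorem in arithmetic progressions -/

section Characters

variable {k : ℕ} [NeZero k]

theorem sum_range_char_eq_zero {χ : DirichletCharacter ℂ k} (hχ : χ ≠ 1) :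
    ∑ n ∈ range k, χ (n : ZMod k) = 0 := by
  rw [← MulChar.sum_eq_zero_of_ne_one hχ]
  refine sum_bij (fun n _ ↦ (n : ZMod k)) (fun _ _ ↦ mem_univ _) (fun a ha b hb hab ↦ ?_)
    (fun b _ ↦ ⟨b.val, by simp [ZMod.val_lt], by simp⟩) (fun _ _ ↦ rfl)
  have := (ZMod.natCast_eq_natCast_iff' a b k).1 hab
  rwa [Nat.mod_eq_of_lt (mem_range.1 ha), Nat.mod_eq_of_lt (mem_range.1 hb)] at this

theorem norm_sum_range_char_le {χ : DirichletCharacter ℂ k} (hχ : χ ≠ 1) (N : ℕ) :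
    ‖∑ n ∈ range N, χ (n : ZMod k)‖ ≤ k := by
  induction N using Nat.strong_induction_on with
  | _ N ih =>
    rcases lt_or_ge N k with hN | hN
    · calc ‖∑ n ∈ range N, χ (n : ZMod k)‖ ≤ ∑ _ ∈ range N, (1 : ℝ) :=
            norm_sum_le_of_le _ fun n _ ↦ χ.norm_le_one _
        _ ≤ k := by simpa using hN.le
    · obtain ⟨c, rfl⟩ := Nat.exists_eq_add_of_le hN
      simp only [sum_range_add, sum_range_char_eq_zero hχ, zero_add, Nat.cast_add,
        CharP.cast_eq_zero]
      exact ih c (by have := NeZero.pos k; omega)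

theorem exists_norm_sum_char_mul_log_div_le {χ : DirichletCharacter ℂ k} (hχ : χ ≠ 1) :
    ∃ C : ℝ, ∀ N : ℕ, ‖∑ n ∈ range N, χ (n : ZMod k) * (log n / n : ℝ)‖ ≤ C := by
  have hanti : AntitoneOn (fun n : ℕ ↦ log n / n) (Set.Ici 3) := by
    intro m hm n hn hmn
    have hexp (i : ℕ) (hi : i ∈ Set.Ici 3) : exp 1 ≤ i := by
      have : (3 : ℝ) ≤ i := by exact_mod_cast hi
      linarith [exp_one_lt_d9]
    exact log_div_self_antitoneOn (hexp m hm) (hexp n hn) (by exact_mod_cast hmn)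
  have htail (N : ℕ) :
      ‖∑ n ∈ Ico 3 N, χ (n : ZMod k) * (log n / n : ℝ)‖ ≤ 2 * (2 * k) * (log 3 / 3) := by
    have := norm_sum_Ico_smul_le_of_antitoneOn hanti (fun n _ ↦ by positivity)
      (fun m _ ↦ norm_sum_Ico_le_of_range (norm_sum_range_char_le hχ) m N)
    simpa only [Complex.real_smul, mul_comm (χ _), Nat.cast_ofNat] using this
  refine ⟨∑ n ∈ range 3, ‖χ (n : ZMod k) * (log n / n : ℝ)‖ + 2 * (2 * k) * (log 3 / 3),
    fun N ↦ ?_⟩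
  rcases le_total N 3 with hN | hN
  · have : 0 ≤ 2 * (2 * (k : ℝ)) * (log 3 / 3) := by positivity
    exact ((norm_sum_le _ _).trans (sum_le_sum_of_subset_of_nonneg (range_subset_range.2 hN)
      fun _ _ _ ↦ norm_nonneg _)).trans (le_add_of_nonneg_right this)
  · rw [range_eq_Ico, ← sum_Ico_consecutive _ (Nat.zero_le 3) hN, ← range_eq_Ico]
    exact (norm_add_le _ _).trans (add_le_add (norm_sum_le _ _) (htail N))

theorem norm_sum_char_div_cpow_sub_LFunction_le {χ : DirichletCharacter ℂ k} (hχ : χ ≠ 1)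
    {s : ℝ} (hs : 1 < s) (N : ℕ) :
    ‖∑ n ∈ Ioc 0 N, χ (n : ZMod k) / (n : ℂ) ^ (s : ℂ) - χ.LFunction s‖ ≤ 4 * k / (N + 1) := by
  have hs' : 1 < (s : ℂ).re := by simpa using hs
  have hterm (n : ℕ) :
      LSeries.term (fun n ↦ χ n) s n = ((n : ℝ) ^ (-s)) • χ (n : ZMod k) := by
    rcases eq_or_ne n 0 with rfl | hn
    · simp [zero_rpow (by linarith : -s ≠ 0)]
    · rw [LSeries.term_of_ne_zero hn, Complex.real_smul, Complex.ofReal_cpow n.cast_nonneg,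
        Complex.ofReal_neg, Complex.cpow_neg, Complex.ofReal_natCast, div_eq_inv_mul]
  have hhead : ∑ n ∈ Ioc 0 N, χ (n : ZMod k) / (n : ℂ) ^ (s : ℂ) =
      ∑ n ∈ range (N + 1), LSeries.term (fun n ↦ χ n) s n := by
    rw [sum_range_succ_eq_sum_Ioc (LSeries.term_zero _ _)]
    refine sum_congr rfl fun n hn ↦ ?_
    rw [LSeries.term_of_ne_zero (mem_Ioc.1 hn).1.ne']
  have hanti : AntitoneOn (fun n : ℕ ↦ (n : ℝ) ^ (-s)) (Set.Ici (N + 1)) := by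
    intro m hm n _ hmn
    have : 0 < m := by have := Set.mem_Ici.1 hm; omega
    exact rpow_le_rpow_of_nonpos (by exact_mod_cast this) (by exact_mod_cast hmn) (by linarith)
  rw [DirichletCharacter.LFunction_eq_LSeries χ hs', hhead]
  refine le_of_tendsto (tendsto_const_nhds.sub
    (χ.LSeriesSummable_of_one_lt_re hs').hasSum.tendsto_sum_nat).norm ?_
  filter_upwards [Filter.eventually_ge_atTop (N + 1)] with M hM
  rw [norm_sub_rev, ← sum_Ico_eq_sub _ hM, sum_congr rfl fun n _ ↦ hterm n]
  refine (norm_sum_Ico_smul_le_of_antitoneOn hanti (fun n _ ↦ by positivity)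
      (fun m _ ↦ norm_sum_Ico_le_of_range (norm_sum_range_char_le hχ) m M)).trans ?_
  have hpow : ((N + 1 : ℕ) : ℝ) ^ (-s) ≤ ((N : ℝ) + 1)⁻¹ := by
    rw [← rpow_neg_one, Nat.cast_add_one]
    exact rpow_le_rpow_of_exponent_le (by simp) (by linarith)
  calc 2 * (2 * (k : ℝ)) * ((N + 1 : ℕ) : ℝ) ^ (-s) ≤ 2 * (2 * k) * ((N : ℝ) + 1)⁻¹ := by gcongr
    _ = 4 * k / (N + 1) := by ring

theorem norm_sum_char_div_sub_LFunction_one_le {χ : DirichletCharacter ℂ k} (hχ : χ ≠ 1)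
    (N : ℕ) :
    ‖∑ n ∈ Ioc 0 N, χ (n : ZMod k) / (n : ℂ) - χ.LFunction 1‖ ≤ 4 * k / (N + 1) := by
  let F (s : ℝ) : ℂ := ∑ n ∈ Ioc 0 N, χ (n : ZMod k) / (n : ℂ) ^ (s : ℂ) - χ.LFunction s
  have hF : Continuous F := by
    refine .sub (continuous_finsetSum _ fun n hn ↦ ?_)
      ((DirichletCharacter.differentiable_LFunction hχ).continuous.comp Complex.continuous_ofReal)
    have hn0 : (n : ℂ) ≠ 0 := Nat.cast_ne_zero.2 (mem_Ioc.1 hn).1.ne'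
    exact continuous_const.div (Complex.continuous_ofReal.const_cpow (.inl hn0))
      fun s ↦ by simp [hn0]
  have hlim : Filter.Tendsto (fun s ↦ ‖F s‖) (nhdsWithin 1 (Set.Ioi 1)) (nhds ‖F 1‖) :=
    hF.norm.continuousAt.tendsto.mono_left nhdsWithin_le_nhds
  have := le_of_tendsto hlim (Filter.eventually_of_mem self_mem_nhdsWithin fun s hs ↦
    norm_sum_char_div_cpow_sub_LFunction_le hχ hs N)
  simpa [F] using this

theorem norm_sum_char_mul_vonMangoldt_mul_sub_le {χ : DirichletCharacter ℂ k} (hχ : χ ≠ 1)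
    (N : ℕ) :
    ‖∑ d ∈ Ioc 0 N, χ (d : ZMod k) * (Λ d / d : ℝ) *
      (∑ m ∈ Ioc 0 (N / d), χ (m : ZMod k) / (m : ℂ) - χ.LFunction 1)‖ ≤ 24 * k := by
  have hterm (d : ℕ) (hd : d ∈ Ioc 0 N) : ‖χ (d : ZMod k) * (Λ d / d : ℝ) *
      (∑ m ∈ Ioc 0 (N / d), χ (m : ZMod k) / (m : ℂ) - χ.LFunction 1)‖ ≤ Λ d * (4 * k / N) := by
    have hd0 : (0 : ℝ) < d := by exact_mod_cast (mem_Ioc.1 hd).1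
    have hN0 : (0 : ℝ) < N := hd0.trans_le (by exact_mod_cast (mem_Ioc.1 hd).2)
    rw [norm_mul, norm_mul, Complex.norm_real, Real.norm_of_nonneg (vonMangoldt_div_nonneg d)]
    calc _ ≤ 1 * (Λ d / d) * (4 * k / (N / d)) := by
          have := vonMangoldt_div_nonneg d
          gcongr
          · exact χ.norm_le_one _
          · refine (norm_sum_char_div_sub_LFunction_one_le hχ (N / d)).trans ?_
            gcongr
            exact natCast_div_le_cast_div_add_one N d
      _ = Λ d * (4 * k / N) := by field_simp
  refine (norm_sum_le_of_le _ hterm).trans ?_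
  rw [← sum_mul]
  calc (∑ d ∈ Ioc 0 N, Λ d) * (4 * k / N) ≤ 6 * N * (4 * k / N) := by
        gcongr
        exact sum_vonMangoldt_le N
    _ = 24 * k * (N / N) := by ring
    _ ≤ 24 * k := mul_le_of_le_one_right (by positivity) (div_self_le_one _)

theorem exists_norm_sum_char_mul_vonMangoldt_div_le {χ : DirichletCharacter ℂ k} (hχ : χ ≠ 1) :
    ∃ C : ℝ, ∀ N : ℕ, ‖∑ n ∈ range N, χ (n : ZMod k) * (Λ n / n : ℝ)‖ ≤ C := by
  obtain ⟨C, hC⟩ := exists_norm_sum_char_mul_log_div_le hχ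
  have hL : 0 < ‖χ.LFunction 1‖ :=
    norm_pos_iff.2 (DirichletCharacter.LFunction_apply_one_ne_zero hχ)
  have hC0 : 0 ≤ C := (norm_nonneg _).trans (hC 0)
  refine ⟨(C + 24 * k) / ‖χ.LFunction 1‖, fun N ↦ ?_⟩
  rcases N with _ | N
  · simp only [range_zero, sum_empty, norm_zero]
    positivity
  have hlog : ∑ n ∈ Ioc 0 N, χ (n : ZMod k) * (log n / n : ℝ) =
      ∑ d ∈ Ioc 0 N, χ (d : ZMod k) * (Λ d / d : ℝ) *
        ∑ m ∈ Ioc 0 (N / d), χ (m : ZMod k) / (m : ℂ) := by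
    have := sum_log_smul_eq_sum_vonMangoldt_smul_mul
      (h := fun n : ℕ ↦ χ (n : ZMod k) / (n : ℂ))
      (fun m n ↦ by push_cast; rw [map_mul, mul_div_mul_comm]) N
    simp only [Complex.real_smul] at this
    convert this using 2 with n _ n _ <;> push_cast <;> ring
  have hfactor : (∑ n ∈ Ioc 0 N, χ (n : ZMod k) * (Λ n / n : ℝ)) * χ.LFunction 1 =
      ∑ n ∈ Ioc 0 N, χ (n : ZMod k) * (log n / n : ℝ) -
        ∑ d ∈ Ioc 0 N, χ (d : ZMod k) * (Λ d / d : ℝ) *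
          (∑ m ∈ Ioc 0 (N / d), χ (m : ZMod k) / (m : ℂ) - χ.LFunction 1) := by
    rw [hlog, ← sum_sub_distrib, sum_mul]
    exact sum_congr rfl fun d _ ↦ by ring
  rw [sum_range_succ_eq_sum_Ioc (by simp), le_div_iff₀ hL, ← norm_mul, hfactor,
    ← sum_range_succ_eq_sum_Ioc (by simp)]
  exact (norm_sub_le _ _).trans
    (add_le_add (hC _) (norm_sum_char_mul_vonMangoldt_mul_sub_le hχ N))

theorem exists_norm_sum_prime_char_mul_log_div_le {χ : DirichletCharacter ℂ k} (hχ : χ ≠ 1) :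
    ∃ C : ℝ, ∀ N : ℕ,
      ‖∑ p ∈ range N with p.Prime, χ (p : ZMod k) * (log p / p : ℝ)‖ ≤ C := by
  obtain ⟨C, hC⟩ := exists_norm_sum_char_mul_vonMangoldt_div_le hχ
  refine ⟨C + nonprimeVonMangoldtSum, fun N ↦ ?_⟩
  have hsplit : ∑ p ∈ range N with p.Prime, χ (p : ZMod k) * (log p / p : ℝ) =
      ∑ n ∈ range N, χ (n : ZMod k) * (Λ n / n : ℝ) -
        ∑ n ∈ range N with ¬n.Prime, χ (n : ZMod k) * (Λ n / n : ℝ) := by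
    rw [← sum_filter_add_sum_filter_not (range N) Nat.Prime, add_sub_cancel_right]
    exact sum_congr rfl fun p hp ↦ by
      rw [ArithmeticFunction.vonMangoldt_apply_prime (mem_filter.1 hp).2]
  rw [hsplit]
  refine (norm_sub_le _ _).trans (add_le_add (hC N) ?_)
  refine (norm_sum_le_of_le _ fun n _ ↦ ?_).trans (sum_vonMangoldt_div_nonprime_le (range N))
  rw [norm_mul, Complex.norm_real, Real.norm_of_nonneg (vonMangoldt_div_nonneg n)]
  exact mul_le_of_le_one_left (vonMangoldt_div_nonneg n) (χ.norm_le_one _)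

theorem exists_norm_sum_prime_one_char_sub_one_le :
    ∃ C : ℝ, ∀ N : ℕ, ‖∑ p ∈ range N with p.Prime,
      ((1 : DirichletCharacter ℂ k) (p : ZMod k) - 1) * (log p / p : ℝ)‖ ≤ C := by
  refine ⟨∑ n ∈ k.divisors, log n / n, fun N ↦ ?_⟩
  have hzero (p : ℕ) (hp : p.Prime) (hpk : ¬p ∣ k) :
      (1 : DirichletCharacter ℂ k) (p : ZMod k) - 1 = 0 := by
    rw [MulChar.one_apply ((ZMod.isUnit_iff_coprime p k).2 (hp.coprime_iff_not_dvd.2 hpk)),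
      sub_self]
  have hone (p : ℕ) (hp : p.Prime) (hpk : p ∣ k) :
      (1 : DirichletCharacter ℂ k) (p : ZMod k) - 1 = -1 := by
    rw [MulChar.map_nonunit, zero_sub]
    rw [ZMod.isUnit_iff_coprime, hp.coprime_iff_not_dvd]
    exact not_not.2 hpk
  rw [← sum_filter_add_sum_filter_not _ (· ∣ k), add_eq_left.2 (sum_eq_zero fun p hp ↦ by
    simp only [mem_filter] at hp
    rw [hzero p hp.1.2 hp.2, zero_mul])]
  refine (norm_sum_le_of_le (f := fun p : ℕ ↦ _) (n := fun p : ℕ ↦ log p / p) _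
    fun p hp ↦ ?_).trans (sum_le_sum_of_subset_of_nonneg (fun p hp ↦ ?_)
      fun n _ _ ↦ by positivity)
  · simp only [mem_filter] at hp
    rw [hone p hp.1.2 hp.2, norm_mul, norm_neg, norm_one, one_mul, Complex.norm_real,
      Real.norm_of_nonneg (by positivity)]
  · exact Nat.mem_divisors.2 ⟨(mem_filter.1 hp).2, NeZero.ne k⟩

end Characters

/-- The discrepancy `𝟙[n ≡ ℓ mod k] - 1/φ(k)` of a single integer `n` with respect to the reduced
residue class `ℓ`; the theorem amounts to its cancellation over the values of `P₂`. -/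
noncomputable def residueDiscrepancy (k ℓ n : ℕ) : ℝ :=
  (if n ≡ ℓ [MOD k] then 1 else 0) - 1 / (k.totient : ℝ)

theorem abs_residueDiscrepancy_le_one (k ℓ n : ℕ) : |residueDiscrepancy k ℓ n| ≤ 1 := by
  have h0 : 0 ≤ 1 / (k.totient : ℝ) := by positivity
  have h1 : 1 / (k.totient : ℝ) ≤ 1 := by
    rw [one_div]
    exact Nat.cast_inv_le_one _
  rw [residueDiscrepancy, abs_le]
  split_ifs <;> constructor <;> linarith

section Orthogonality

variable {k ℓ : ℕ} [NeZero k]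

theorem residueDiscrepancy_mul_totient (hℓ : ℓ.Coprime k) (n : ℕ) :
    ((residueDiscrepancy k ℓ n * k.totient : ℝ) : ℂ) =
      ∑ χ : DirichletCharacter ℂ k,
        (χ (ℓ : ZMod k)⁻¹ * χ (n : ZMod k) - if χ = 1 then 1 else 0) := by
  classical
  have hφ : (k.totient : ℝ) ≠ 0 := Nat.cast_ne_zero.2 (Nat.totient_pos.2 (NeZero.pos k)).ne'
  have hcongr : (ℓ : ZMod k) = n ↔ n ≡ ℓ [MOD k] := by
    rw [ZMod.natCast_eq_natCast_iff, Nat.ModEq.comm]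
  rw [sum_sub_distrib,
    DirichletCharacter.sum_char_inv_mul_char_eq ℂ ((ZMod.isUnit_iff_coprime ℓ k).2 hℓ) n,
    sum_ite_eq' univ 1, if_pos (mem_univ _), residueDiscrepancy, sub_mul, one_div_mul_cancel hφ]
  by_cases h : n ≡ ℓ [MOD k]
  · simp [h, hcongr]
  · simp [h, hcongr]

theorem exists_norm_sum_prime_char_sub_le (hℓ : ℓ.Coprime k) (χ : DirichletCharacter ℂ k) :
    ∃ C : ℝ, ∀ N : ℕ, ‖∑ p ∈ range N with p.Prime,
      (χ (ℓ : ZMod k)⁻¹ * χ (p : ZMod k) - if χ = 1 then 1 else 0) * (log p / p : ℝ)‖ ≤ C := by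
  by_cases hχ : χ = 1
  · have hone : (1 : DirichletCharacter ℂ k) (ℓ : ZMod k)⁻¹ = 1 := by
      rw [← ZMod.coe_unitOfCoprime ℓ hℓ, ZMod.inv_coe_unit]
      exact MulChar.one_apply (Units.isUnit _)
    obtain ⟨C, hC⟩ := exists_norm_sum_prime_one_char_sub_one_le (k := k)
    exact ⟨C, fun N ↦ by simpa only [hχ, hone, one_mul, if_true] using hC N⟩
  · obtain ⟨C, hC⟩ := exists_norm_sum_prime_char_mul_log_div_le hχ
    refine ⟨C, fun N ↦ ?_⟩
    simp only [hχ, if_false, sub_zero, mul_assoc, ← mul_sum]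
    rw [norm_mul]
    exact (mul_le_of_le_one_left (norm_nonneg _) (χ.norm_le_one _)).trans (hC N)

theorem exists_abs_sum_prime_residueDiscrepancy_mul_log_div_le (hℓ : ℓ.Coprime k) :
    ∃ C : ℝ, ∀ N : ℕ,
      |∑ p ∈ range N with p.Prime, residueDiscrepancy k ℓ p * (log p / p)| ≤ C := by
  choose C hC using exists_norm_sum_prime_char_sub_le (ℓ := ℓ) hℓ
  have hφ : 0 < (k.totient : ℝ) := Nat.cast_pos.2 (Nat.totient_pos.2 (NeZero.pos k))
  refine ⟨(∑ χ, C χ) / k.totient, fun N ↦ ?_⟩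
  have hexpand : ((∑ p ∈ range N with p.Prime,
      residueDiscrepancy k ℓ p * k.totient * (log p / p) : ℝ) : ℂ) =
      ∑ χ : DirichletCharacter ℂ k, ∑ p ∈ range N with p.Prime,
        (χ (ℓ : ZMod k)⁻¹ * χ (p : ZMod k) - if χ = 1 then 1 else 0) * (log p / p : ℝ) := by
    rw [sum_comm, Complex.ofReal_sum]
    simp only [Complex.ofReal_mul _ (log _ / _), residueDiscrepancy_mul_totient hℓ, sum_mul]
  rw [le_div_iff₀ hφ, ← Nat.abs_cast k.totient, ← abs_mul, sum_mul,
    sum_congr rfl fun p _ ↦ mul_right_comm _ _ _, ← Real.norm_eq_abs, ← Complex.norm_real, hexpand]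
  exact norm_sum_le_of_le _ fun χ _ ↦ hC χ N

end Orthogonality

/-- A weight `f`, bounded by `1`, whose Mertens sums `∑ f(p)/p` over the primes of `[a, b)` cancel
as fast as `C / log a`. Only this property of the discrepancy of a residue class enters the
estimate for the sum of `f(P₂(n))`. -/
structure HasMertensCancellation (f : ℕ → ℝ) (C : ℝ) : Prop where
  abs_le_one (n : ℕ) : |f n| ≤ 1
  abs_sum_le (a b : ℕ) : 2 ≤ a → |∑ p ∈ Ico a b with p.Prime, f p / p| ≤ C / log a

theorem exists_hasMertensCancellation_residueDiscrepancy {k ℓ : ℕ} [NeZero k]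
    (hℓ : ℓ.Coprime k) : ∃ C : ℝ, HasMertensCancellation (residueDiscrepancy k ℓ) C := by
  obtain ⟨C, hC⟩ := exists_abs_sum_prime_residueDiscrepancy_mul_log_div_le hℓ
  refine ⟨2 * (2 * C), abs_residueDiscrepancy_le_one k ℓ, fun a b ha ↦ ?_⟩
  simp only [sum_filter, ← Real.norm_eq_abs] at hC ⊢
  have hanti : AntitoneOn (fun n : ℕ ↦ (log n)⁻¹) (Set.Ici a) := fun m hm n _ hmn ↦ by
    have hm2 : 1 < m := ha.trans hm
    have : 0 < log m := log_pos (by exact_mod_cast hm2)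
    have : 0 < (m : ℝ) := by exact_mod_cast hm2.pos
    dsimp only
    gcongr
  have hparts := norm_sum_Ico_smul_le_of_antitoneOn hanti
    (fun n _ ↦ inv_nonneg.2 (log_natCast_nonneg n))
    (fun n _ ↦ norm_sum_Ico_le_of_range hC n b)
  rw [div_eq_mul_inv]
  refine le_of_eq_of_le ?_ hparts
  congr 1
  refine sum_congr rfl fun n hn ↦ ?_
  have hlog : log n ≠ 0 := (log_pos (by
    exact_mod_cast (by have := (mem_Ico.1 hn).1; omega : 1 < n))).ne'
  rw [smul_ite, smul_zero, smul_eq_mul]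
  congr 1
  field_simp

namespace HasMertensCancellation

variable {f : ℕ → ℝ} {C : ℝ}

theorem nonneg (hf : HasMertensCancellation f C) : 0 ≤ C := by
  have := (abs_nonneg _).trans (hf.abs_sum_le 2 2 le_rfl)
  rw [Nat.cast_ofNat] at this
  simpa using (le_div_iff₀ (log_pos one_lt_two)).1 this

theorem truncate (hf : HasMertensCancellation f C) (T : ℕ) :
    HasMertensCancellation (fun n ↦ if n < T then f n else 0) C where
  abs_le_one n := by
    split_ifs
    exacts [hf.abs_le_one n, by simp]
  abs_sum_le a b ha := by
    have hsum : ∑ p ∈ Ico a b with p.Prime, (if p < T then f p else 0) / p =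
        ∑ p ∈ Ico a (min b T) with p.Prime, f p / p := by
      simp only [ite_div, zero_div]
      rw [← sum_filter]
      exact sum_congr (by grind) fun _ _ ↦ rfl
    rw [hsum]
    exact hf.abs_sum_le a _ ha

end HasMertensCancellation

/-! ### The density of smooth numbers -/

/-- The number `Ψ(y, z)` of `z`-smooth integers `0 < n ≤ y`: all prime factors are at most `z`. -/
noncomputable def smoothCount (z : ℕ) (y : ℝ) : ℕ :=
  #{n ∈ Ioc 0 ⌊y⌋₊ | n ∈ Nat.smoothNumbers (z + 1)}

/-- The proportion `Ψ(y, z) / y` of `z`-smooth integers below `y`. -/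
noncomputable def smoothDensity (z : ℕ) (y : ℝ) : ℝ := smoothCount z y / y

/-- The (completely multiplicative) indicator of the `z`-smooth integers. -/
noncomputable def smoothIndicator (z n : ℕ) : ℝ := if n ∈ Nat.smoothNumbers (z + 1) then 1 else 0

/-- The term `Λ(d)/d` of Mertens' sum, restricted to the `z`-smooth integers `d`. -/
noncomputable def smoothWeight (z d : ℕ) : ℝ := smoothIndicator z d * (Λ d / d)

section SmoothIndicator

variable (z : ℕ)

theorem smoothIndicator_nonneg (n : ℕ) : 0 ≤ smoothIndicator z n := by
  unfold smoothIndicator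
  split_ifs <;> simp

theorem smoothIndicator_le_one (n : ℕ) : smoothIndicator z n ≤ 1 := by
  unfold smoothIndicator
  split_ifs <;> simp

theorem smoothIndicator_mul (m n : ℕ) :
    smoothIndicator z (m * n) = smoothIndicator z m * smoothIndicator z n := by
  have hmem : m * n ∈ Nat.smoothNumbers (z + 1) ↔
      m ∈ Nat.smoothNumbers (z + 1) ∧ n ∈ Nat.smoothNumbers (z + 1) := by
    simp only [Nat.mem_smoothNumbers']
    exact ⟨fun h ↦ ⟨fun p hp hpm ↦ h p hp (hpm.mul_right n),
      fun p hp hpn ↦ h p hp (hpn.mul_left m)⟩,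
      fun h p hp hpmn ↦ (hp.dvd_mul.1 hpmn).elim (h.1 p hp) (h.2 p hp)⟩
  simp only [smoothIndicator, hmem, ite_and]
  split_ifs <;> simp

theorem natCast_smoothCount (y : ℝ) :
    (smoothCount z y : ℝ) = ∑ n ∈ Ioc 0 ⌊y⌋₊, smoothIndicator z n := by
  simp [smoothCount, smoothIndicator]

theorem smoothWeight_nonneg (d : ℕ) : 0 ≤ smoothWeight z d :=
  mul_nonneg (smoothIndicator_nonneg z d) (vonMangoldt_div_nonneg d)

theorem smoothWeight_le (d : ℕ) : smoothWeight z d ≤ Λ d / d :=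
  mul_le_of_le_one_left (vonMangoldt_div_nonneg d) (smoothIndicator_le_one z d)

theorem smoothWeight_eq_zero {p : ℕ} (hp : p.Prime) (hzp : z < p) : smoothWeight z p = 0 := by
  have : p ∉ Nat.smoothNumbers (z + 1) := fun h ↦ by
    have := Nat.mem_smoothNumbers'.1 h p hp dvd_rfl
    omega
  rw [smoothWeight, smoothIndicator, if_neg this, zero_mul]

theorem sum_smoothWeight_mul_le {F : ℕ → ℝ} (hF0 : ∀ d, 0 ≤ F d) (hF1 : ∀ d, F d ≤ 1)
    (s : Finset ℕ) :
    ∑ d ∈ s, smoothWeight z d * F d ≤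
      ∑ d ∈ s with d ≤ z, Λ d / d * F d + nonprimeVonMangoldtSum := by
  rw [← sum_filter_add_sum_filter_not s (· ≤ z)]
  refine add_le_add (sum_le_sum fun d _ ↦
    mul_le_mul_of_nonneg_right (smoothWeight_le z d) (hF0 d)) ?_
  refine le_trans ?_ (sum_vonMangoldt_div_nonprime_le s)
  rw [sum_filter, sum_filter]
  refine sum_le_sum fun d _ ↦ ?_
  have hle := (mul_le_of_le_one_right (smoothWeight_nonneg z d) (hF1 d)).trans (smoothWeight_le z d)
  have hnonneg := vonMangoldt_div_nonneg d
  by_cases hp : d.Prime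
  · split_ifs with hdz
    · rfl
    · rw [smoothWeight_eq_zero z hp (not_le.1 hdz), zero_mul]
  · split_ifs
    exacts [hnonneg, hle]

end SmoothIndicator

section SmoothDensity

variable {z : ℕ} {y : ℝ}

theorem smoothCount_le_floor (z : ℕ) (y : ℝ) : smoothCount z y ≤ ⌊y⌋₊ :=
  (card_filter_le _ _).trans (Nat.card_Ioc _ _).le

theorem smoothCount_mono_left {z' : ℕ} (hz : z ≤ z') (y : ℝ) :
    smoothCount z y ≤ smoothCount z' y :=
  card_le_card (monotone_filter_right _ fun _ _ hn ↦
    Nat.smoothNumbers_mono (Nat.succ_le_succ hz) hn)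

theorem smoothDensity_nonneg (z : ℕ) (hy : 0 ≤ y) : 0 ≤ smoothDensity z y :=
  div_nonneg (Nat.cast_nonneg _) hy

theorem smoothDensity_eq_zero (z : ℕ) (hy : y < 1) : smoothDensity z y = 0 := by
  have := smoothCount_le_floor z y
  rw [Nat.floor_eq_zero.2 hy, Nat.le_zero] at this
  rw [smoothDensity, this, Nat.cast_zero, zero_div]

theorem smoothDensity_le_one (z : ℕ) (y : ℝ) : smoothDensity z y ≤ 1 := by
  rcases lt_or_ge y 1 with hy | hy
  · rw [smoothDensity_eq_zero z hy]
    exact zero_le_one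
  · have hy0 : 0 < y := zero_lt_one.trans_le hy
    rw [smoothDensity, div_le_one hy0]
    exact (Nat.cast_le.2 (smoothCount_le_floor z y)).trans (Nat.floor_le hy0.le)

theorem abs_smoothDensity_sub_le_one {y' : ℝ} (hy : 0 ≤ y) (hy' : 0 ≤ y') :
    |smoothDensity z y - smoothDensity z y'| ≤ 1 :=
  abs_sub_le_of_nonneg_of_le (smoothDensity_nonneg z hy) (smoothDensity_le_one z y)
    (smoothDensity_nonneg z hy') (smoothDensity_le_one z y')

theorem smoothCount_eq_floor (hyz : y < z + 1) : smoothCount z y = ⌊y⌋₊ := by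
  rw [smoothCount, filter_true_of_mem, Nat.card_Ioc, Nat.sub_zero]
  intro n hn
  obtain ⟨hn0, hny⟩ := mem_Ioc.1 hn
  refine Nat.mem_smoothNumbers_of_lt hn0 (hny.trans_lt ?_)
  exact (Nat.floor_lt' (by omega)).2 (by exact_mod_cast hyz)

theorem abs_smoothDensity_sub_one_le (hy : 0 < y) (hyz : y < z + 1) :
    |smoothDensity z y - 1| ≤ 1 / y := by
  rw [smoothDensity, smoothCount_eq_floor hyz, div_sub_one hy.ne', abs_div, abs_of_pos hy]
  gcongr
  rw [abs_le]
  constructor <;> linarith [Nat.floor_le hy.le, Nat.lt_floor_add_one y]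

theorem sum_smoothWeight_mul_smoothDensity (z : ℕ) (hy : 0 < y) {M : ℕ} (hM : ⌊y⌋₊ ≤ M) :
    ∑ d ∈ Ioc 0 M, smoothWeight z d * smoothDensity z (y / d) =
      (∑ n ∈ Ioc 0 ⌊y⌋₊, smoothIndicator z n * log n) / y := by
  have hlog := sum_log_smul_eq_sum_vonMangoldt_smul_mul (smoothIndicator_mul z) ⌊y⌋₊
  simp only [smul_eq_mul, mul_comm (log _)] at hlog
  rw [hlog, sum_div]
  symm
  rw [← sum_subset (Ioc_subset_Ioc_right hM)]
  · refine sum_congr rfl fun d hd ↦ ?_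
    have : (0 : ℝ) < d := Nat.cast_pos.2 (mem_Ioc.1 hd).1
    rw [smoothWeight, smoothDensity, natCast_smoothCount, Nat.floor_div_natCast]
    field_simp
  · intro d hd hdy
    have hd0 : (0 : ℝ) < d := Nat.cast_pos.2 (mem_Ioc.1 hd).1
    have hyd : ⌊y⌋₊ < d := by grind
    rw [smoothDensity_eq_zero, mul_zero]
    exact (div_lt_one hd0).2 ((Nat.floor_lt hy.le).1 hyd)

theorem sum_log_sub_log_le (hy : 1 ≤ y) : ∑ n ∈ Ioc 0 ⌊y⌋₊, (log y - log n) ≤ 2 * y := by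
  have hy0 : 0 < y := zero_lt_one.trans_le hy
  have hfloor : 1 ≤ ⌊y⌋₊ := Nat.floor_pos.2 hy
  have hfloor' : (1 : ℝ) ≤ ⌊y⌋₊ := by exact_mod_cast hfloor
  have hfact := mul_log_sub_le_log_factorial hfloor
  rw [log_factorial_eq_sum_log] at hfact
  have hratio : log y - log ⌊y⌋₊ ≤ 1 := by
    rw [← log_div hy0.ne' (by positivity)]
    have : y / ⌊y⌋₊ ≤ 2 := by
      rw [div_le_iff₀ (by positivity)]
      linarith [Nat.lt_floor_add_one y]
    linarith [log_le_sub_one_of_pos (x := y / ⌊y⌋₊) (by positivity)]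
  calc ∑ n ∈ Ioc 0 ⌊y⌋₊, (log y - log n)
      = ⌊y⌋₊ * log y - ∑ n ∈ Ioc 0 ⌊y⌋₊, log n := by rw [sum_sub_distrib]; simp
    _ ≤ ⌊y⌋₊ * (log y - log ⌊y⌋₊ + 1) := by linarith
    _ ≤ ⌊y⌋₊ * (1 + 1) := by gcongr
    _ ≤ y * (1 + 1) := by gcongr; exact Nat.floor_le hy0.le
    _ = 2 * y := by ring

theorem smoothDensity_mul_log_sub_sum_mem_Icc (z : ℕ) (hy : 1 ≤ y) {M : ℕ} (hM : ⌊y⌋₊ ≤ M) :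
    smoothDensity z y * log y - ∑ d ∈ Ioc 0 M, smoothWeight z d * smoothDensity z (y / d) ∈
      Set.Icc 0 2 := by
  have hy0 : 0 < y := zero_lt_one.trans_le hy
  have hnonneg : ∀ n ∈ Ioc 0 ⌊y⌋₊, 0 ≤ log y - log n := fun n hn ↦ by
    obtain ⟨hn0, hny⟩ := mem_Ioc.1 hn
    exact sub_nonneg.2 (log_le_log (Nat.cast_pos.2 hn0) ((Nat.le_floor_iff hy0.le).1 hny))
  have hdiff : smoothDensity z y * log y -
      ∑ d ∈ Ioc 0 M, smoothWeight z d * smoothDensity z (y / d) =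
        (∑ n ∈ Ioc 0 ⌊y⌋₊, smoothIndicator z n * (log y - log n)) / y := by
    rw [sum_smoothWeight_mul_smoothDensity z hy0 hM, smoothDensity, natCast_smoothCount]
    simp only [mul_sub, sum_sub_distrib]
    rw [← sum_mul]
    ring
  rw [hdiff]
  refine ⟨div_nonneg (sum_nonneg fun n hn ↦
    mul_nonneg (smoothIndicator_nonneg z n) (hnonneg n hn)) hy0.le, (div_le_iff₀ hy0).2 ?_⟩
  exact (sum_le_sum fun n hn ↦ mul_le_of_le_one_left (hnonneg n hn)
    (smoothIndicator_le_one z n)).trans (sum_log_sub_log_le hy)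

theorem smoothDensity_mul_log_le {U : ℝ} (hz : 1 ≤ z) (hy : 1 ≤ y) (hU0 : 0 ≤ U)
    (hU : ∀ d : ℕ, 1 ≤ d → d ≤ z → smoothDensity z (y / d) ≤ U) :
    smoothDensity z y * log y ≤ (log z + 6) * U + (nonprimeVonMangoldtSum + 2) := by
  have hnonneg (d : ℕ) : 0 ≤ smoothDensity z (y / d) := smoothDensity_nonneg z (by positivity)
  have hsum := sum_smoothWeight_mul_le z hnonneg (fun d ↦ smoothDensity_le_one z _) (Ioc 0 ⌊y⌋₊)
  have hsmall : ∑ d ∈ Ioc 0 ⌊y⌋₊ with d ≤ z, Λ d / d * smoothDensity z (y / d) ≤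
      (log z + 6) * U := by
    calc _ ≤ ∑ d ∈ Ioc 0 ⌊y⌋₊ with d ≤ z, Λ d / d * U := sum_le_sum fun d hd ↦
        mul_le_mul_of_nonneg_left (hU d (by grind) (by grind)) (vonMangoldt_div_nonneg d)
      _ ≤ ∑ d ∈ Ioc 0 z, Λ d / d * U := sum_le_sum_of_subset_of_nonneg (by grind)
        fun d _ _ ↦ mul_nonneg (vonMangoldt_div_nonneg d) hU0
      _ ≤ (log z + 6) * U := by
          rw [← sum_mul]
          exact mul_le_mul_of_nonneg_right (sum_vonMangoldt_div_le_log_add hz) hU0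
  linarith [(smoothDensity_mul_log_sub_sum_mem_Icc z hy le_rfl).2]

-- `D(y) log y` is at most `log z + 6` times the maximal density at the points `y / d`, `d ≤ z`,
-- so the density halves whenever `log y` grows by `log z + 6`.
theorem smoothDensity_le_of_le_log (hz : 1 ≤ z) (j : ℕ) (hy : 0 < y)
    (hlog : (2 + j) * (log z + 6) ≤ log y) :
    smoothDensity z y ≤ (1 / 2) ^ j + (nonprimeVonMangoldtSum + 2) / (log z + 6) := by
  set L := log z + 6
  set K := nonprimeVonMangoldtSum + 2
  have hL0 : 0 < L := add_pos_of_nonneg_of_pos (log_natCast_nonneg z) (by norm_num)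
  have hK0 : 0 ≤ K := add_nonneg nonprimeVonMangoldtSum_nonneg zero_le_two
  induction j generalizing y with
  | zero =>
    have : 0 ≤ K / L := by positivity
    linarith [smoothDensity_le_one z y, pow_zero (1 / 2 : ℝ)]
  | succ j ih =>
    push_cast at hlog
    have hlogy : 2 * L ≤ log y := by
      refine le_trans ?_ hlog
      gcongr
      linarith [j.cast_nonneg (α := ℝ)]
    have hy1 : 1 ≤ y := (log_nonneg_iff hy).1 (by linarith)
    have hstep (d : ℕ) (hd : 1 ≤ d) (hdz : d ≤ z) :
        smoothDensity z (y / d) ≤ (1 / 2) ^ j + K / L := by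
      have hd0 : (0 : ℝ) < d := Nat.cast_pos.2 hd
      refine ih (by positivity) ?_
      rw [log_div hy.ne' hd0.ne']
      linarith [log_le_log hd0 (Nat.cast_le.2 hdz)]
    refine le_of_mul_le_mul_left ?_ (by positivity : 0 < 2 * L)
    calc 2 * L * smoothDensity z y ≤ smoothDensity z y * log y := by
          rw [mul_comm]
          exact mul_le_mul_of_nonneg_left hlogy (smoothDensity_nonneg z hy.le)
      _ ≤ L * ((1 / 2) ^ j + K / L) + K := smoothDensity_mul_log_le hz hy1 (by positivity) hstep
      _ = 2 * L * ((1 / 2) ^ (j + 1) + K / L) := by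
          field_simp
          ring

end SmoothDensity

/-! ### Slow variation of the smooth density -/

theorem sum_vonMangoldt_div_mul_min_le {y : ℝ} (hy : 1 ≤ y) :
    ∑ d ∈ Ioc 0 ⌊2 * y⌋₊, Λ d / d * min 1 (2 / (y / d)) ≤ 26 := by
  have hy0 : 0 < y := zero_lt_one.trans_le hy
  have hfloor : 1 ≤ ⌊y⌋₊ := Nat.floor_pos.2 hy
  have hfloor' : (1 : ℝ) ≤ ⌊y⌋₊ := by exact_mod_cast hfloor
  have hyM : ⌊y⌋₊ ≤ ⌊2 * y⌋₊ := Nat.floor_le_floor (by linarith)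
  have hsmall : ∑ d ∈ Ioc 0 ⌊y⌋₊, Λ d / d * min 1 (2 / (y / d)) ≤ 12 := by
    calc _ ≤ ∑ d ∈ Ioc 0 ⌊y⌋₊, Λ d * (2 / y) := sum_le_sum fun d hd ↦ by
          have hd0 : (0 : ℝ) < d := Nat.cast_pos.2 (mem_Ioc.1 hd).1
          refine (mul_le_mul_of_nonneg_left (min_le_right _ _)
            (vonMangoldt_div_nonneg d)).trans_eq ?_
          field_simp
      _ ≤ (6 * ⌊y⌋₊) * (2 / y) := by
          rw [← sum_mul]
          gcongr
          exact sum_vonMangoldt_le _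
      _ ≤ (6 * y) * (2 / y) := by
          gcongr
          exact Nat.floor_le hy0.le
      _ = 12 := by field_simp; norm_num
  have hlarge : ∑ d ∈ Ioc ⌊y⌋₊ ⌊2 * y⌋₊, Λ d / d * min 1 (2 / (y / d)) ≤ 14 := by
    have hratio : (⌊2 * y⌋₊ : ℝ) / ⌊y⌋₊ ≤ 2 ^ 2 := by
      rw [div_le_iff₀ (by linarith)]
      linarith [Nat.floor_le (by linarith : 0 ≤ 2 * y), Nat.lt_floor_add_one y]
    have hlog := log_le_log (div_pos (Nat.cast_pos.2 (by omega)) (by linarith)) hratio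
    rw [log_pow, Nat.cast_ofNat] at hlog
    have hsum := sum_Ioc_vonMangoldt_div_le hfloor hyM
    refine (sum_le_sum fun d _ ↦ mul_le_of_le_one_right (vonMangoldt_div_nonneg d)
      (min_le_left _ _)).trans ?_
    linarith [log_two_lt_d9]
  rw [← sum_Ioc_consecutive _ (Nat.zero_le _) hyM]
  linarith

theorem sum_vonMangoldt_div_sqrt_le {y : ℝ} (hy : 1 ≤ y) :
    ∑ d ∈ Ioc 0 (Nat.sqrt ⌊2 * y⌋₊), Λ d / d ≤ log y / 2 + 7 := by
  set s := Nat.sqrt ⌊2 * y⌋₊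
  have hs : 1 ≤ s := Nat.le_sqrt.2 (Nat.floor_pos.2 (by linarith))
  have hsq : (s : ℝ) ^ 2 ≤ 2 * y := by
    refine le_trans ?_ (Nat.floor_le (by linarith : 0 ≤ 2 * y))
    exact_mod_cast Nat.sqrt_le' _
  have hlog := log_le_log (by positivity) hsq
  rw [log_pow, log_mul two_ne_zero (by linarith), Nat.cast_ofNat] at hlog
  linarith [sum_vonMangoldt_div_le_log_add hs, log_two_lt_d9]

/-- The constant in the slow variation `D(λ y) - D(y) ≪ 1 / log z`, for `1 ≤ λ ≤ 2`, of the density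
`D` of `z`-smooth integers. -/
noncomputable def dilationConst : ℝ := 4 * (nonprimeVonMangoldtSum + 30)

theorem dilationConst_pos : 0 < dilationConst := by
  have := nonprimeVonMangoldtSum_nonneg
  unfold dilationConst
  positivity

section Dilation

variable {z : ℕ} {c : ℝ}

theorem abs_smoothDensity_mul_sub_le_two_div {v : ℝ} (hc : 1 ≤ c) (hv : 0 < v)
    (hcv : c * v < z + 1) : |smoothDensity z (c * v) - smoothDensity z v| ≤ 2 / v := by
  have hvcv : v ≤ c * v := le_mul_of_one_le_left hv.le hc
  have h1 := abs_smoothDensity_sub_one_le (hv.trans_le hvcv) hcv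
  have h2 := abs_smoothDensity_sub_one_le hv (hvcv.trans_lt hcv)
  calc |smoothDensity z (c * v) - smoothDensity z v|
      ≤ |smoothDensity z (c * v) - 1| + |1 - smoothDensity z v| := abs_sub_le _ _ _
    _ ≤ 1 / v + 1 / v := by
        rw [abs_sub_comm 1]
        exact add_le_add (h1.trans (one_div_le_one_div_of_le hv hvcv)) h2
    _ = 2 / v := by ring

theorem sum_vonMangoldt_div_mul_abs_dilation_le {y δ : ℝ} (hc : 1 ≤ c) (hc2 : c ≤ 2) (hy : 1 ≤ y)
    (hδ0 : 0 ≤ δ) (hδ : ∀ d : ℕ, 2 ≤ d → (z : ℝ) / 2 ≤ y / d →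
      |smoothDensity z (c * (y / d)) - smoothDensity z (y / d)| ≤ δ) :
    ∑ d ∈ Ioc 0 ⌊2 * y⌋₊ with d ≤ z,
      Λ d / d * |smoothDensity z (c * (y / d)) - smoothDensity z (y / d)| ≤
        δ * (log y / 2 + 7) + 26 := by
  have hterm : ∀ d ∈ {d ∈ Ioc 0 ⌊2 * y⌋₊ | d ≤ z},
      Λ d / d * |smoothDensity z (c * (y / d)) - smoothDensity z (y / d)| ≤
        (if d ∈ Ioc 0 (Nat.sqrt ⌊2 * y⌋₊) then Λ d / d * δ else 0) +
          Λ d / d * min 1 (2 / (y / d)) := fun d hd ↦ by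
    simp only [mem_filter, mem_Ioc] at hd
    have hd0 : (0 : ℝ) < d := Nat.cast_pos.2 hd.1.1
    have hdz : (d : ℝ) ≤ z := Nat.cast_le.2 hd.2
    have hΛ := vonMangoldt_div_nonneg d
    have hv : 0 < y / d := by positivity
    have hmin : 0 ≤ Λ d / d * min 1 (2 / (y / d)) := by positivity
    rcases lt_or_ge (y / d) (z / 2) with hsmall | hlarge
    · refine le_add_of_nonneg_of_le (by split_ifs <;> positivity) ?_
      gcongr
      exact le_min (abs_smoothDensity_sub_le_one (by positivity) hv.le)
        (abs_smoothDensity_mul_sub_le_two_div hc hv (by nlinarith))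
    · rcases (Nat.succ_le_of_lt hd.1.1).lt_or_eq with hd1 | rfl
      · have hsqrt : d ∈ Ioc 0 (Nat.sqrt ⌊2 * y⌋₊) := by
          rw [le_div_iff₀ hd0] at hlarge
          refine mem_Ioc.2 ⟨hd.1.1, Nat.le_sqrt.2 (Nat.le_floor ?_)⟩
          push_cast
          nlinarith
        rw [if_pos hsqrt]
        exact le_add_of_le_of_nonneg (mul_le_mul_of_nonneg_left (hδ d hd1 hlarge) hΛ) hmin
      · simp
  refine (sum_le_sum hterm).trans ?_
  rw [sum_add_distrib, ← sum_filter]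
  refine add_le_add ?_ ((sum_le_sum_of_subset_of_nonneg (filter_subset _ _) fun d _ _ ↦ ?_).trans
    (sum_vonMangoldt_div_mul_min_le hy))
  · refine (sum_le_sum_of_subset_of_nonneg (t := Ioc 0 (Nat.sqrt ⌊2 * y⌋₊)) (by grind)
      fun d _ _ ↦ mul_nonneg (vonMangoldt_div_nonneg d) hδ0).trans ?_
    rw [← sum_mul, mul_comm]
    exact mul_le_mul_of_nonneg_left (sum_vonMangoldt_div_sqrt_le hy) hδ0
  · have := vonMangoldt_div_nonneg d
    positivity

theorem abs_smoothDensity_mul_sub_mul_log_le {y δ : ℝ} (hc : 1 ≤ c) (hc2 : c ≤ 2) (hy : 1 ≤ y)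
    (hδ0 : 0 ≤ δ) (hδ : ∀ d : ℕ, 2 ≤ d → (z : ℝ) / 2 ≤ y / d →
      |smoothDensity z (c * (y / d)) - smoothDensity z (y / d)| ≤ δ) :
    |smoothDensity z (c * y) - smoothDensity z y| * log y ≤
      δ * (log y / 2 + 7) + (nonprimeVonMangoldtSum + 29) := by
  have hcy : 1 ≤ c * y := one_le_mul_of_one_le_of_one_le hc hy
  have hA := smoothDensity_mul_log_sub_sum_mem_Icc z hy
    (Nat.floor_le_floor (by linarith : y ≤ 2 * y))
  have hB := smoothDensity_mul_log_sub_sum_mem_Icc z hcy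
    (Nat.floor_le_floor (by nlinarith : c * y ≤ 2 * y))
  have hsum : |∑ d ∈ Ioc 0 ⌊2 * y⌋₊, smoothWeight z d * smoothDensity z (c * y / d) -
      ∑ d ∈ Ioc 0 ⌊2 * y⌋₊, smoothWeight z d * smoothDensity z (y / d)| ≤
        δ * (log y / 2 + 7) + (nonprimeVonMangoldtSum + 26) := by
    rw [← sum_sub_distrib]
    calc _ ≤ ∑ d ∈ Ioc 0 ⌊2 * y⌋₊, smoothWeight z d *
          |smoothDensity z (c * (y / d)) - smoothDensity z (y / d)| :=
          abs_sum_le_sum_abs _ _ |>.trans_eq <| sum_congr rfl fun d _ ↦ by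
            rw [← mul_sub, abs_mul, abs_of_nonneg (smoothWeight_nonneg z d), mul_div_assoc]
      _ ≤ δ * (log y / 2 + 7) + 26 + nonprimeVonMangoldtSum :=
          (sum_smoothWeight_mul_le z (fun d ↦ abs_nonneg _)
            (fun d ↦ abs_smoothDensity_sub_le_one (by positivity) (by positivity)) _).trans
            (by gcongr; exact sum_vonMangoldt_div_mul_abs_dilation_le hc hc2 hy hδ0 hδ)
      _ = _ := by ring
  rw [log_mul (by linarith) (by linarith), mul_add] at hB
  have hlogc : log c ≤ 1 := by linarith [log_le_sub_one_of_pos (zero_lt_one.trans_le hc)]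
  have hDc : smoothDensity z (c * y) * log c ∈ Set.Icc 0 1 :=
    ⟨mul_nonneg (smoothDensity_nonneg z (by linarith)) (log_nonneg hc),
      mul_le_one₀ (smoothDensity_le_one z _) (log_nonneg hc) hlogc⟩
  rw [← abs_of_nonneg (log_nonneg hy), ← abs_mul, abs_of_nonneg (log_nonneg hy), sub_mul]
  have hsum' := abs_le.1 hsum
  exact abs_le.2 ⟨by linarith [hA.1, hA.2, hB.1, hB.2, hDc.1, hDc.2, hsum'.1],
    by linarith [hA.1, hA.2, hB.1, hB.2, hDc.1, hDc.2, hsum'.2]⟩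

-- Induction on the scale of `y`: the logarithmic identity halves the bound carried over from
-- `y / d`, `d ≥ 2`, since only the `d ≪ √y` contribute to the main term.
theorem abs_smoothDensity_mul_sub_le_of_half_le (hz : 2 ≤ z) (hc : 1 ≤ c) (hc2 : c ≤ 2) {y : ℝ}
    (hy : (z : ℝ) / 2 ≤ y) :
    |smoothDensity z (c * y) - smoothDensity z y| ≤ dilationConst / log z := by
  have hz' : (2 : ℝ) ≤ z := by exact_mod_cast hz
  have hlogz : 0 < log z := log_pos (by linarith)
  have hC := nonprimeVonMangoldtSum_nonneg
  rcases le_or_gt (log z) 40 with hsmall | hbig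
  · refine (abs_smoothDensity_sub_le_one (mul_nonneg (by linarith) (by linarith))
      (by linarith)).trans ?_
    rw [le_div_iff₀ hlogz, dilationConst]
    linarith
  set δ := dilationConst / log z
  have hδ0 : 0 ≤ δ := by positivity [dilationConst_pos]
  obtain ⟨j, hj⟩ := pow_unbounded_of_one_lt y one_lt_two
  induction j generalizing y with
  | zero => linarith [pow_zero (2 : ℝ)]
  | succ j ih =>
    have hlogy : log z - 1 ≤ log y := by
      have := log_le_log (by linarith) hy
      rw [log_div (by linarith) two_ne_zero] at this
      linarith [log_two_lt_d9]
    have hstep (d : ℕ) (hd : 2 ≤ d) (hdy : (z : ℝ) / 2 ≤ y / d) :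
        |smoothDensity z (c * (y / d)) - smoothDensity z (y / d)| ≤ δ := by
      have hd' : (2 : ℝ) ≤ d := by exact_mod_cast hd
      refine ih hdy ?_
      rw [div_lt_iff₀ (by linarith)]
      calc y < 2 ^ j * 2 := by rwa [← pow_succ]
        _ ≤ 2 ^ j * d := by gcongr
    have hmain := abs_smoothDensity_mul_sub_mul_log_le hc hc2 (by linarith) hδ0 hstep
    refine le_of_mul_le_mul_right (hmain.trans ?_) (by linarith : 0 < log y)
    have hδz : δ * log z = 4 * (nonprimeVonMangoldtSum + 30) := div_mul_cancel₀ _ hlogz.ne'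
    have := mul_le_mul_of_nonneg_left (by linarith : log z / 4 ≤ log y / 2 - 7) hδ0
    linarith

theorem abs_smoothDensity_mul_sub_le (hz : 2 ≤ z) (hc : 1 ≤ c) (hc2 : c ≤ 2) {v : ℝ}
    (hv : 0 < v) :
    |smoothDensity z (c * v) - smoothDensity z v| ≤ dilationConst / log z + 2 / v := by
  have hlogz : 0 ≤ log z := log_natCast_nonneg z
  rcases le_or_gt ((z : ℝ) / 2) v with h | h
  · exact (abs_smoothDensity_mul_sub_le_of_half_le hz hc hc2 h).trans
      (le_add_of_nonneg_right (by positivity))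
  · exact (abs_smoothDensity_mul_sub_le_two_div hc hv (by nlinarith)).trans
      (le_add_of_nonneg_left (div_nonneg dilationConst_pos.le hlogz))

end Dilation

/-! ### Primes in short intervals and the smoothness bound -/

theorem sum_Ioc_prime_one_div_le {a b : ℕ} (ha : 2 ≤ a) (hab : a ≤ b) (hb : b ≤ 2 * a) :
    ∑ p ∈ Ioc a b with p.Prime, 1 / (p : ℝ) ≤ 13 / log a := by
  have ha' : (2 : ℝ) ≤ a := by exact_mod_cast ha
  have hb' : (b : ℝ) ≤ 2 * a := by exact_mod_cast hb
  have hb0 : (0 : ℝ) < b := by exact_mod_cast (by omega : 0 < b)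
  have hratio : log ((b : ℝ) / a) ≤ log 2 :=
    log_le_log (by positivity) ((div_le_iff₀ (by linarith)).2 hb')
  rw [le_div_iff₀ (log_pos (by linarith)), sum_mul, sum_filter]
  calc _ ≤ ∑ n ∈ Ioc a b, Λ n / n := by
        refine sum_le_sum fun n hn ↦ ?_
        split_ifs with hp
        · rw [ArithmeticFunction.vonMangoldt_apply_prime hp, one_div_mul_eq_div]
          gcongr
          exact (mem_Ioc.1 hn).1.le
        · exact vonMangoldt_div_nonneg n
    _ ≤ 13 := by linarith [sum_Ioc_vonMangoldt_div_le (by omega) hab, log_two_lt_d9]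

theorem two_thirds_mul_le_log_two_pow (i : ℕ) : 2 / 3 * (i : ℝ) ≤ log ((2 ^ i : ℕ) : ℝ) := by
  rw [Nat.cast_pow, log_pow, Nat.cast_ofNat, mul_comm]
  gcongr
  linarith [log_two_gt_d9]

theorem two_le_two_pow {i : ℕ} (hi : 1 ≤ i) : 2 ≤ 2 ^ i :=
  le_self_pow₀ one_le_two (by omega)

/-- The primes of the dyadic block `[2^i, 2^(i+1))`. -/
def dyadicPrimes (i : ℕ) : Finset ℕ := {p ∈ Ico (2 ^ i) (2 ^ (i + 1)) | p.Prime}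

theorem sum_dyadicPrimes_one_div_le {i : ℕ} (hi : 1 ≤ i) :
    ∑ p ∈ dyadicPrimes i, 1 / (p : ℝ) ≤ 21 / i := by
  have hi' : (0 : ℝ) < i := by exact_mod_cast hi
  have hlog := two_thirds_mul_le_log_two_pow i
  have hlog0 : 0 < log ((2 ^ i : ℕ) : ℝ) := lt_of_lt_of_le (by positivity) hlog
  have hle : 2 ^ i ≤ 2 ^ (i + 1) := Nat.pow_le_pow_right two_pos i.le_succ
  have hsubset : dyadicPrimes i ⊆ insert (2 ^ i) {p ∈ Ioc (2 ^ i) (2 ^ (i + 1)) | p.Prime} := by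
    grind [dyadicPrimes]
  have hhead : 1 / ((2 ^ i : ℕ) : ℝ) ≤ 1 / log ((2 ^ i : ℕ) : ℝ) :=
    one_div_le_one_div_of_le hlog0 (log_le_self (Nat.cast_nonneg _))
  calc ∑ p ∈ dyadicPrimes i, 1 / (p : ℝ)
      ≤ ∑ p ∈ insert (2 ^ i) ({p ∈ Ioc (2 ^ i) (2 ^ (i + 1)) | p.Prime} : Finset ℕ), 1 / (p : ℝ) :=
        sum_le_sum_of_subset_of_nonneg hsubset fun _ _ _ ↦ by positivity
    _ ≤ 1 / log ((2 ^ i : ℕ) : ℝ) + 13 / log ((2 ^ i : ℕ) : ℝ) := by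
        rw [sum_insert (by simp)]
        exact add_le_add hhead
          (sum_Ioc_prime_one_div_le (two_le_two_pow hi) hle (by rw [pow_succ, mul_comm]))
    _ = 14 / log ((2 ^ i : ℕ) : ℝ) := by ring
    _ ≤ 21 / i := by
        rw [div_le_div_iff₀ hlog0 hi']
        linarith

section SmoothShift

variable {z z' : ℕ} {y : ℝ}

theorem smoothCount_le_add_sum_floor_div (z z' : ℕ) (y : ℝ) :
    smoothCount z' y ≤ smoothCount z y + ∑ p ∈ Ioc z z' with p.Prime, ⌊y⌋₊ / p := by
  have hsubset : {n ∈ Ioc 0 ⌊y⌋₊ | n ∈ Nat.smoothNumbers (z' + 1)} ⊆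
      {n ∈ Ioc 0 ⌊y⌋₊ | n ∈ Nat.smoothNumbers (z + 1)} ∪
        {p ∈ Ioc z z' | p.Prime}.biUnion fun p ↦ {n ∈ Ioc 0 ⌊y⌋₊ | p ∣ n} := by
    intro n hn
    obtain ⟨hny, hnz'⟩ := mem_filter.1 hn
    by_cases hnz : n ∈ Nat.smoothNumbers (z + 1)
    · exact mem_union_left _ (mem_filter.2 ⟨hny, hnz⟩)
    · rw [Nat.mem_smoothNumbers'] at hnz hnz'
      push Not at hnz
      obtain ⟨p, hp, hpn, hzp⟩ := hnz
      have hpz' := hnz' p hp hpn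
      exact mem_union_right _ (mem_biUnion.2 ⟨p, mem_filter.2 ⟨mem_Ioc.2 (by omega), hp⟩,
        mem_filter.2 ⟨hny, hpn⟩⟩)
  refine (card_le_card hsubset).trans ((card_union_le _ _).trans (Nat.add_le_add_left ?_ _))
  simpa only [Nat.Ioc_filter_dvd_card_eq_div] using
    card_biUnion_le (s := {p ∈ Ioc z z' | p.Prime}) (t := fun p ↦ {n ∈ Ioc 0 ⌊y⌋₊ | p ∣ n})

theorem abs_smoothDensity_sub_le_of_le_two_mul (hz : 2 ≤ z) (hzz' : z ≤ z') (hz' : z' ≤ 2 * z)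
    (hy : 0 < y) : |smoothDensity z' y - smoothDensity z y| ≤ 13 / log z := by
  have hmono : (smoothCount z y : ℝ) ≤ smoothCount z' y :=
    Nat.cast_le.2 (smoothCount_mono_left hzz' y)
  have hcount : (smoothCount z' y : ℝ) ≤
      smoothCount z y + ∑ p ∈ Ioc z z' with p.Prime, ((⌊y⌋₊ / p : ℕ) : ℝ) := by
    exact_mod_cast smoothCount_le_add_sum_floor_div z z' y
  have hsum : ∑ p ∈ Ioc z z' with p.Prime, ((⌊y⌋₊ / p : ℕ) : ℝ) ≤ 13 / log z * y := by
    refine le_trans ?_ (mul_le_mul_of_nonneg_right (sum_Ioc_prime_one_div_le hz hzz' hz') hy.le)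
    rw [sum_mul]
    refine sum_le_sum fun p _ ↦ ?_
    rw [one_div_mul_eq_div, ← Nat.floor_div_natCast]
    exact Nat.floor_le (by positivity)
  rw [smoothDensity, smoothDensity, ← sub_div, abs_of_nonneg (by bound), div_le_iff₀ hy]
  linarith

theorem abs_smoothDensity_div_sub_le (hz : 2 ≤ z) (hzz' : z ≤ z') (hz' : z' ≤ 2 * z) {w : ℝ}
    (hw : 0 < w) :
    |smoothDensity z' (w / z') - smoothDensity z (w / z)| ≤
      (dilationConst + 13) / log z + 4 * z / w := by
  have hz0 : (0 : ℝ) < z := by exact_mod_cast (by omega : 0 < z)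
  have hz'0 : (0 : ℝ) < z' := by exact_mod_cast (by omega : 0 < z')
  have hz'z : (z' : ℝ) ≤ 2 * z := by exact_mod_cast hz'
  have hshift := abs_smoothDensity_sub_le_of_le_two_mul hz hzz' hz' (div_pos hw hz'0)
  have hdilate := abs_smoothDensity_mul_sub_le (c := z' / z) hz
    ((one_le_div hz0).2 (by exact_mod_cast hzz')) ((div_le_iff₀ hz0).2 hz'z) (div_pos hw hz'0)
  rw [div_mul_div_cancel₀' hz'0.ne', abs_sub_comm] at hdilate
  calc _ ≤ 13 / log z + (dilationConst / log z + 2 / (w / z')) :=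
        (abs_sub_le _ _ _).trans (add_le_add hshift hdilate)
    _ = (dilationConst + 13) / log z + 2 * z' / w := by field_simp; ring
    _ ≤ (dilationConst + 13) / log z + 4 * z / w := by
        gcongr _ + ?_ / w
        linarith

end SmoothShift

theorem smoothCount_div_natCast (z : ℕ) {d : ℕ} (hd : 0 < d) (y : ℝ) :
    smoothCount z (y / d) =
      #{n ∈ Ioc 0 ⌊y⌋₊ | d ∣ n ∧ n / d ∈ Nat.smoothNumbers (z + 1)} := by
  rw [smoothCount, Nat.floor_div_natCast]
  refine card_bij (fun m _ ↦ d * m) ?_ (fun m _ n _ h ↦ Nat.eq_of_mul_eq_mul_left hd h) ?_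
  · intro m hm
    obtain ⟨hm, hmz⟩ := mem_filter.1 hm
    obtain ⟨hm0, hmy⟩ := mem_Ioc.1 hm
    rw [mem_filter, mem_Ioc, Nat.mul_div_cancel_left _ hd]
    exact ⟨⟨Nat.mul_pos hd hm0, (Nat.mul_le_mul_left d hmy).trans (Nat.mul_div_le _ _)⟩,
      dvd_mul_right d m, hmz⟩
  · intro n hn
    obtain ⟨hn, hdn, hnz⟩ := mem_filter.1 hn
    obtain ⟨hn0, hny⟩ := mem_Ioc.1 hn
    exact ⟨n / d, mem_filter.2 ⟨mem_Ioc.2 ⟨Nat.div_pos (Nat.le_of_dvd hn0 hdn) hd,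
      Nat.div_le_div_right hny⟩, hnz⟩, Nat.mul_div_cancel' hdn⟩

theorem mem_smoothNumbers_of_div_mem {p n : ℕ} (hp : p.Prime) (hpn : p ∣ n)
    (h : n / p ∈ Nat.smoothNumbers (p + 1)) : n ∈ Nat.smoothNumbers (p + 1) := by
  rw [← Nat.mul_div_cancel' hpn]
  exact Nat.mul_mem_smoothNumbers (Nat.mem_smoothNumbers'.2 fun q hq hqp ↦
    Nat.lt_succ_of_le ((Nat.prime_dvd_prime_iff_eq hq hp).1 hqp).le) h

theorem sum_smoothCount_div_le {s : Finset ℕ} {z : ℕ} (hs : ∀ p ∈ s, p.Prime ∧ p ≤ z) (y : ℝ) :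
    ∑ p ∈ s, smoothCount p (y / p) ≤ smoothCount z y := by
  have hdisj : (s : Set ℕ).PairwiseDisjoint fun p ↦
      {n ∈ Ioc 0 ⌊y⌋₊ | p ∣ n ∧ n / p ∈ Nat.smoothNumbers (p + 1)} := by
    intro p hp q hq hpq
    refine disjoint_left.2 fun n hnp hnq ↦ hpq ?_
    obtain ⟨-, hpn, hnp⟩ := mem_filter.1 hnp
    obtain ⟨-, hqn, hnq⟩ := mem_filter.1 hnq
    have hqp := Nat.mem_smoothNumbers'.1
      (mem_smoothNumbers_of_div_mem (hs p hp).1 hpn hnp) q (hs q hq).1 hqn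
    have hpq := Nat.mem_smoothNumbers'.1
      (mem_smoothNumbers_of_div_mem (hs q hq).1 hqn hnq) p (hs p hp).1 hpn
    omega
  rw [sum_congr rfl fun p hp ↦ smoothCount_div_natCast p (hs p hp).1.pos y, ← card_biUnion hdisj]
  refine card_le_card fun n hn ↦ ?_
  obtain ⟨p, hp, hn⟩ := mem_biUnion.1 hn
  obtain ⟨hny, hpn, hnp⟩ := mem_filter.1 hn
  exact mem_filter.2 ⟨hny, Nat.smoothNumbers_mono (Nat.succ_le_succ (hs p hp).2)
    (mem_smoothNumbers_of_div_mem (hs p hp).1 hpn hnp)⟩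

/-! ### Averages over the largest prime factor -/

/-- The mean over the positive integers `n ≤ w` of `f(P(n))`, where only those `n` with `P(n) ∈ s`
contribute. The integers `n ≤ w` with `P(n) = p` are the products of `p` with a `p`-smooth integer
below `w / p`, so their proportion is `smoothDensity p (w / p) / p`. -/
noncomputable def largestPrimeMean (f : ℕ → ℝ) (s : Finset ℕ) (w : ℝ) : ℝ :=
  ∑ p ∈ s with p.Prime, f p / p * smoothDensity p (w / p)

theorem natCast_mul_smoothDensity_div {p : ℕ} (hp : p ≠ 0) (w : ℝ) :
    1 / (p : ℝ) * smoothDensity p (w / p) = smoothCount p (w / p) / w := by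
  have : (p : ℝ) ≠ 0 := Nat.cast_ne_zero.2 hp
  rw [smoothDensity]
  field_simp

theorem abs_largestPrimeMean_le {f : ℕ → ℝ} (hf : ∀ n, |f n| ≤ 1) {s : Finset ℕ} {z : ℕ}
    (hs : ∀ p ∈ s, p ≤ z) {w : ℝ} (hw : 0 ≤ w) :
    |largestPrimeMean f s w| ≤ smoothDensity z w := by
  calc |largestPrimeMean f s w| ≤ ∑ p ∈ s with p.Prime, smoothCount p (w / p) / w := by
        refine abs_sum_le_sum_abs _ _ |>.trans (sum_le_sum fun p hp ↦ ?_)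
        have hD : 0 ≤ smoothDensity p (w / p) := smoothDensity_nonneg p (by positivity)
        rw [abs_mul, abs_of_nonneg hD, abs_div, Nat.abs_cast,
          ← natCast_mul_smoothDensity_div (mem_filter.1 hp).2.ne_zero]
        gcongr
        exact hf p
    _ ≤ smoothDensity z w := by
        rw [← sum_div, smoothDensity]
        gcongr
        exact_mod_cast sum_smoothCount_div_le
          (fun p hp ↦ ⟨(mem_filter.1 hp).2, hs p (mem_filter.1 hp).1⟩) w

theorem sum_Ico_two_pow_eq_sum_dyadic {M : Type*} [AddCommMonoid M] (f : ℕ → M) {a b : ℕ}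
    (hab : a ≤ b) :
    ∑ n ∈ Ico (2 ^ a) (2 ^ b), f n = ∑ i ∈ Ico a b, ∑ n ∈ Ico (2 ^ i) (2 ^ (i + 1)), f n := by
  induction b, hab using Nat.le_induction with
  | base => simp
  | succ b hab ih =>
    rw [sum_Ico_succ_top hab, ← ih, sum_Ico_consecutive] <;>
      exact Nat.pow_le_pow_right two_pos (by omega)

theorem sum_prime_eq_sum_dyadicPrimes {M : Type*} [AddCommMonoid M] (f : ℕ → M) {a b : ℕ}
    (hab : a ≤ b) :
    ∑ p ∈ Ico (2 ^ a) (2 ^ b) with p.Prime, f p = ∑ i ∈ Ico a b, ∑ p ∈ dyadicPrimes i, f p := by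
  simp only [dyadicPrimes, sum_filter]
  exact sum_Ico_two_pow_eq_sum_dyadic _ hab

/-- Bounds the variation of `smoothDensity p (w / p)` for `2^i ≤ p ≤ 2^(i+1)`. -/
noncomputable def dyadicVariation (w : ℝ) (i : ℕ) : ℝ :=
  2 * (dilationConst + 13) / i + 4 * 2 ^ i / w

section DyadicVariation

variable {w : ℝ}

theorem dyadicVariation_nonneg (hw : 0 < w) (i : ℕ) : 0 ≤ dyadicVariation w i := by
  unfold dyadicVariation
  positivity [dilationConst_pos]

theorem abs_smoothDensity_div_sub_le_dyadicVariation (hw : 0 < w) {i p : ℕ} (hi : 1 ≤ i)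
    (hp : 2 ^ i ≤ p) (hp' : p ≤ 2 ^ (i + 1)) :
    |smoothDensity p (w / p) - smoothDensity (2 ^ i) (w / (2 ^ i : ℕ))| ≤
      dyadicVariation w i := by
  have hi' : (0 : ℝ) < i := by exact_mod_cast hi
  have hA := dilationConst_pos
  refine (abs_smoothDensity_div_sub_le (two_le_two_pow hi) hp (by rwa [← pow_succ']) hw).trans ?_
  rw [dyadicVariation, Nat.cast_pow, Nat.cast_ofNat]
  refine add_le_add_left ?_ _
  calc (dilationConst + 13) / log (2 ^ i) ≤ (dilationConst + 13) / (2 / 3 * i) := by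
        gcongr
        exact_mod_cast two_thirds_mul_le_log_two_pow i
    _ ≤ 2 * (dilationConst + 13) / i := by
        rw [div_le_div_iff₀ (by positivity) hi']
        nlinarith

theorem sum_Ico_one_div_sq_le {a : ℕ} (ha : 1 ≤ a) (b : ℕ) :
    ∑ i ∈ Ico a b, 1 / (i : ℝ) ^ 2 ≤ 2 / (a : ℝ) := by
  obtain ⟨a, rfl⟩ := Nat.exists_eq_add_of_le' ha
  have hIoo : Ico (a + 1) b = Ioo a b := by
    ext
    simp
  simpa only [hIoo, one_div, Nat.cast_add_one] using sum_Ioo_inv_sq_le (α := ℝ) a b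

theorem sum_one_div_mul_dyadicVariation_le (hw : 0 < w) {a b : ℕ} (ha : 1 ≤ a)
    (hab : ∑ i ∈ Ico a b, (2 : ℝ) ^ i ≤ 2 * w) :
    ∑ i ∈ Ico a b, 1 / (i : ℝ) * dyadicVariation w i ≤ (4 * dilationConst + 60) / a := by
  have : (0 : ℝ) < a := by exact_mod_cast ha
  have hA := dilationConst_pos
  calc ∑ i ∈ Ico a b, 1 / (i : ℝ) * dyadicVariation w i
      ≤ ∑ i ∈ Ico a b, (2 * (dilationConst + 13) * (1 / (i : ℝ) ^ 2) + 4 / (a * w) * 2 ^ i) := by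
        refine sum_le_sum fun i hi ↦ ?_
        have hai : (a : ℝ) ≤ i := by exact_mod_cast (mem_Ico.1 hi).1
        calc 1 / (i : ℝ) * dyadicVariation w i
            = 2 * (dilationConst + 13) * (1 / (i : ℝ) ^ 2) + 1 / i * (4 * 2 ^ i / w) := by
              rw [dyadicVariation]
              ring
          _ ≤ 2 * (dilationConst + 13) * (1 / (i : ℝ) ^ 2) + 1 / a * (4 * 2 ^ i / w) := by
              gcongr
          _ = _ := by
              field_simp
    _ ≤ 2 * (dilationConst + 13) * (2 / a) + 4 / (a * w) * (2 * w) := by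
        rw [sum_add_distrib, ← mul_sum, ← mul_sum]
        gcongr
        exact sum_Ico_one_div_sq_le ha b
    _ = (4 * dilationConst + 60) / a := by
        field_simp
        ring

end DyadicVariation

namespace HasMertensCancellation

variable {f : ℕ → ℝ} {C w : ℝ} {a b : ℕ}

theorem abs_sum_dyadicPrimes_le (hf : HasMertensCancellation f C) (ha : 1 ≤ a) (b : ℕ) :
    |∑ i ∈ Ico a b, ∑ p ∈ dyadicPrimes i, f p / p| ≤ 2 * C / a := by
  have hC := hf.nonneg
  have ha' : (0 : ℝ) < a := by exact_mod_cast ha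
  rcases lt_or_ge b a with hba | hab
  · rw [Ico_eq_empty_of_le hba.le, sum_empty, abs_zero]
    positivity
  · rw [← sum_prime_eq_sum_dyadicPrimes _ hab]
    have hlog := two_thirds_mul_le_log_two_pow a
    refine (hf.abs_sum_le _ _ (two_le_two_pow ha)).trans ?_
    rw [div_le_div_iff₀ (by linarith) ha']
    nlinarith

theorem abs_sum_dyadic_mul_smoothDensity_le (hf : HasMertensCancellation f C) (hw : 0 < w)
    (ha : 1 ≤ a) (hab : a ≤ b) :
    |∑ i ∈ Ico a b, smoothDensity (2 ^ i) (w / (2 ^ i : ℕ)) * ∑ p ∈ dyadicPrimes i, f p / p| ≤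
      2 * C / a + 2 * C * ∑ i ∈ Ico a b, 1 / (i : ℝ) * dyadicVariation w i := by
  have hC := hf.nonneg
  have habel := norm_sum_Ico_smul_sub_le (fun i ↦ smoothDensity (2 ^ i) (w / (2 ^ i : ℕ)))
    (fun i ↦ ∑ p ∈ dyadicPrimes i, f p / p) (r := fun i ↦ 2 * C / i) hab
    fun n hn ↦ hf.abs_sum_dyadicPrimes_le (ha.trans hn) b
  simp only [smul_eq_mul, Real.norm_eq_abs] at habel
  have hvar : ∑ i ∈ Ico a b, |smoothDensity (2 ^ (i + 1)) (w / (2 ^ (i + 1) : ℕ)) -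
      smoothDensity (2 ^ i) (w / (2 ^ i : ℕ))| * (2 * C / (i + 1 : ℕ)) ≤
      2 * C * ∑ i ∈ Ico a b, 1 / (i : ℝ) * dyadicVariation w i := by
    rw [mul_sum]
    refine sum_le_sum fun i hi ↦ ?_
    have hi1 : 1 ≤ i := ha.trans (mem_Ico.1 hi).1
    have : (0 : ℝ) < i := by exact_mod_cast hi1
    calc _ ≤ dyadicVariation w i * (2 * C / i) := by
          gcongr
          · exact dyadicVariation_nonneg hw i
          · exact abs_smoothDensity_div_sub_le_dyadicVariation hw hi1
              (Nat.pow_le_pow_right two_pos i.le_succ) le_rfl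
          · exact i.le_succ
      _ = 2 * C * (1 / (i : ℝ) * dyadicVariation w i) := by ring
  have hhead : |smoothDensity (2 ^ a) (w / (2 ^ a : ℕ)) *
      ∑ i ∈ Ico a b, ∑ p ∈ dyadicPrimes i, f p / p| ≤ 2 * C / a := by
    rw [abs_mul, abs_of_nonneg (smoothDensity_nonneg _ (by positivity))]
    exact (mul_le_of_le_one_left (abs_nonneg _) (smoothDensity_le_one _ _)).trans
      (hf.abs_sum_dyadicPrimes_le ha b)
  linarith [abs_sub_abs_le_abs_sub
    (∑ i ∈ Ico a b, smoothDensity (2 ^ i) (w / (2 ^ i : ℕ)) * ∑ p ∈ dyadicPrimes i, f p / p)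
    (smoothDensity (2 ^ a) (w / (2 ^ a : ℕ)) *
      ∑ i ∈ Ico a b, ∑ p ∈ dyadicPrimes i, f p / p)]

theorem abs_largestPrimeMean_Ico_sub_le (hf : HasMertensCancellation f C) (hw : 0 < w)
    (ha : 1 ≤ a) (hab : a ≤ b) :
    |largestPrimeMean f (Ico (2 ^ a) (2 ^ b)) w -
        ∑ i ∈ Ico a b, smoothDensity (2 ^ i) (w / (2 ^ i : ℕ)) * ∑ p ∈ dyadicPrimes i, f p / p| ≤
      21 * ∑ i ∈ Ico a b, 1 / (i : ℝ) * dyadicVariation w i := by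
  rw [largestPrimeMean, sum_prime_eq_sum_dyadicPrimes _ hab, ← sum_sub_distrib, mul_sum]
  refine (abs_sum_le_sum_abs _ _).trans (sum_le_sum fun i hi ↦ ?_)
  have hi1 : 1 ≤ i := ha.trans (mem_Ico.1 hi).1
  rw [mul_sum, ← sum_sub_distrib]
  calc |∑ p ∈ dyadicPrimes i, (f p / p * smoothDensity p (w / p) -
          smoothDensity (2 ^ i) (w / (2 ^ i : ℕ)) * (f p / p))|
      ≤ ∑ p ∈ dyadicPrimes i, 1 / (p : ℝ) * dyadicVariation w i := by
        refine (abs_sum_le_sum_abs _ _).trans (sum_le_sum fun p hp ↦ ?_)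
        have hp := mem_Ico.1 (mem_filter.1 hp).1
        rw [mul_comm (smoothDensity _ _), ← mul_sub, abs_mul, abs_div, Nat.abs_cast]
        gcongr
        · exact hf.abs_le_one p
        · exact abs_smoothDensity_div_sub_le_dyadicVariation hw hi1 hp.1 hp.2.le
    _ ≤ 21 / i * dyadicVariation w i := by
        rw [← sum_mul]
        exact mul_le_mul_of_nonneg_right (sum_dyadicPrimes_one_div_le hi1)
          (dyadicVariation_nonneg hw i)
    _ = 21 * (1 / (i : ℝ) * dyadicVariation w i) := by ring

end HasMertensCancellation

theorem exists_lt_two_pow_and_sum_two_pow_le {w : ℝ} (hw : 1 ≤ w) (a : ℕ) :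
    ∃ b, a ≤ b ∧ w < 2 ^ b ∧ ∑ i ∈ Ico a b, (2 : ℝ) ^ i ≤ 2 * w := by
  obtain ⟨n, hn, hn'⟩ := exists_nat_pow_near hw one_lt_two
  rcases le_or_gt (n + 1) a with h | h
  · refine ⟨a, le_rfl, hn'.trans_le (pow_le_pow_right₀ one_le_two h), ?_⟩
    rw [Ico_self, sum_empty]
    linarith
  · refine ⟨n + 1, h.le, hn', ?_⟩
    calc ∑ i ∈ Ico a (n + 1), (2 : ℝ) ^ i ≤ ∑ i ∈ range (n + 1), (2 : ℝ) ^ i :=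
          sum_le_sum_of_subset_of_nonneg (by grind) fun _ _ _ ↦ by positivity
      _ = 2 ^ (n + 1) - 1 := by rw [geom_sum_eq (by norm_num)]; ring
      _ ≤ 2 * w := by rw [pow_succ]; linarith

theorem largestPrimeMean_range_eq_truncate (f : ℕ → ℝ) {w : ℝ} {N : ℕ} (hw : w < N) (T : ℕ) :
    largestPrimeMean f (range T) w = largestPrimeMean (fun n ↦ if n < T then f n else 0)
      (range N) w := by
  simp only [largestPrimeMean, ite_div, zero_div, ite_mul, zero_mul]
  rw [← sum_filter]
  symm
  refine sum_subset (by grind) fun p hp hpN ↦ ?_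
  have hNp : N ≤ p := by grind
  have hwp : w < p := hw.trans_le (Nat.cast_le.2 hNp)
  have hp0 : (0 : ℝ) < p := Nat.cast_pos.2 (mem_filter.1 hp).2.pos
  rw [smoothDensity_eq_zero _ ((div_lt_one hp0).2 hwp), mul_zero]

theorem HasMertensCancellation.abs_largestPrimeMean_range_le {f : ℕ → ℝ} {C w : ℝ} {a : ℕ}
    (hf : HasMertensCancellation f C) (hw : 1 ≤ w) (ha : 1 ≤ a) (T : ℕ) :
    |largestPrimeMean f (range T) w| ≤
      (2 * C + (2 * C + 21) * (4 * dilationConst + 60)) / a + smoothDensity (2 ^ a) w := by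
  have hC := hf.nonneg
  have hw0 : 0 < w := by linarith
  obtain ⟨b, hab, hwb, hsum⟩ := exists_lt_two_pow_and_sum_two_pow_le hw a
  rw [largestPrimeMean_range_eq_truncate f (N := 2 ^ b) (by exact_mod_cast hwb)]
  have hg := hf.truncate T
  set g : ℕ → ℝ := fun n ↦ if n < T then f n else 0
  have hsplit : largestPrimeMean g (range (2 ^ b)) w =
      largestPrimeMean g (range (2 ^ a)) w + largestPrimeMean g (Ico (2 ^ a) (2 ^ b)) w := by
    simp only [largestPrimeMean, sum_filter]
    exact (sum_range_add_sum_Ico _ (Nat.pow_le_pow_right two_pos hab)).symm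
  have hsmall : |largestPrimeMean g (range (2 ^ a)) w| ≤ smoothDensity (2 ^ a) w :=
    abs_largestPrimeMean_le hg.abs_le_one (fun p hp ↦ (mem_range.1 hp).le) hw0.le
  have hmain := hg.abs_sum_dyadic_mul_smoothDensity_le hw0 ha hab
  have herror := hg.abs_largestPrimeMean_Ico_sub_le hw0 ha hab
  have hvar := mul_le_mul_of_nonneg_left (sum_one_div_mul_dyadicVariation_le hw0 ha hsum)
    (by linarith : 0 ≤ 2 * C + 21)
  rw [hsplit, add_div]
  rw [← mul_div_assoc] at hvar
  set M := ∑ i ∈ Ico a b, smoothDensity (2 ^ i) (w / (2 ^ i : ℕ)) * ∑ p ∈ dyadicPrimes i, g p / p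
  have htriangle := abs_add_three (largestPrimeMean g (range (2 ^ a)) w)
    (largestPrimeMean g (Ico (2 ^ a) (2 ^ b)) w - M) M
  rw [add_assoc, sub_add_cancel] at htriangle
  linarith

/-- The absolute constant in the choice of the smoothness scale `2 ^ i` in `exists_scale`. -/
noncomputable def scaleConst : ℝ := 280 * (nonprimeVonMangoldtSum + 3)

theorem scaleConst_nonneg : 0 ≤ scaleConst := by
  have := nonprimeVonMangoldtSum_nonneg
  unfold scaleConst
  positivity

theorem smoothDensity_two_pow_le_of_mul_le_log {t w : ℝ} {i : ℕ} (ht : 1 ≤ t) (hw : 1 < w)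
    (hexp : log w ≤ exp t) (hi : 1 ≤ i) (hit : 35 * t * i ≤ log w) :
    smoothDensity (2 ^ i) w ≤ 1 / log w + 2 * (nonprimeVonMangoldtSum + 2) / i := by
  have hi' : (1 : ℝ) ≤ i := by exact_mod_cast hi
  have hK := nonprimeVonMangoldtSum_nonneg
  have hj : 2 * t ≤ ⌈2 * t⌉₊ := Nat.le_ceil _
  have hj' : (⌈2 * t⌉₊ : ℝ) < 2 * t + 1 := Nat.ceil_lt_add_one (by linarith)
  have hlog := two_thirds_mul_le_log_two_pow i
  have hlog' : log ((2 ^ i : ℕ) : ℝ) ≤ i := by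
    rw [Nat.cast_pow, log_pow, Nat.cast_ofNat]
    nlinarith [log_two_lt_d9]
  refine (smoothDensity_le_of_le_log Nat.one_le_two_pow ⌈2 * t⌉₊ (by linarith) ?_).trans
    (add_le_add ?_ ?_)
  · calc (2 + (⌈2 * t⌉₊ : ℝ)) * (log ((2 ^ i : ℕ) : ℝ) + 6) ≤ 5 * t * (7 * i) :=
          mul_le_mul (by linarith) (by linarith) (by linarith) (by linarith)
      _ ≤ log w := by linarith
  · rw [one_div_pow]
    refine one_div_le_one_div_of_le (log_pos hw) (hexp.trans ?_)
    rw [← le_log_iff_exp_le (by positivity), log_pow]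
    nlinarith [log_two_gt_d9]
  · rw [div_le_div_iff₀ (by linarith) (by linarith)]
    nlinarith

theorem exists_scale {t w : ℝ} (ht : 1 ≤ t) (hw : 1 ≤ w) (hexp : log w ≤ exp t) :
    ∃ i : ℕ, 1 ≤ i ∧ 1 / (i : ℝ) ≤ scaleConst * t / (1 + log w) ∧
      smoothDensity (2 ^ i) w ≤ scaleConst * t / (1 + log w) := by
  have hK := nonprimeVonMangoldtSum_nonneg
  have hlog : 0 ≤ log w := log_nonneg hw
  rcases lt_or_ge (log w) (35 * t) with hsmall | hlarge
  · have hone : 1 ≤ scaleConst * t / (1 + log w) := by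
      rw [one_le_div (by linarith), scaleConst]
      nlinarith
    exact ⟨1, le_rfl, by simpa using hone, (smoothDensity_le_one _ _).trans hone⟩
  have ht35 : 0 < 35 * t := by linarith
  have hw1 : 1 < w := lt_of_not_ge fun h ↦ by
    rw [hw.antisymm' h, log_one] at hlarge
    linarith
  set i := ⌊log w / (35 * t)⌋₊
  have hi : 1 ≤ i := Nat.floor_pos.2 ((one_le_div ht35).2 hlarge)
  have hi' : (1 : ℝ) ≤ i := by exact_mod_cast hi
  have hit : (i : ℝ) * (35 * t) ≤ log w :=
    (le_div_iff₀ ht35).1 (Nat.floor_le (div_nonneg hlog ht35.le))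
  have hti : log w < (i + 1) * (35 * t) := (div_lt_iff₀ ht35).1 (Nat.lt_floor_add_one _)
  have hinv : 1 / (i : ℝ) ≤ 140 * (t / (1 + log w)) := by
    rw [← mul_div_assoc, div_le_div_iff₀ (by linarith) (by linarith)]
    nlinarith
  have hinvlog : 1 / log w ≤ 2 * (t / (1 + log w)) := by
    rw [← mul_div_assoc, div_le_div_iff₀ (by linarith) (by linarith)]
    nlinarith
  have htw : 0 ≤ t / (1 + log w) := by positivity
  simp only [mul_div_assoc]
  refine ⟨i, hi, hinv.trans (mul_le_mul_of_nonneg_right ?_ htw), ?_⟩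
  · rw [scaleConst]
    linarith
  · have hdensity := smoothDensity_two_pow_le_of_mul_le_log ht hw1 hexp hi (by linarith)
    rw [mul_div_assoc, ← mul_one_div _ (i : ℝ)] at hdensity
    have := mul_le_mul_of_nonneg_left hinv (by linarith : 0 ≤ 2 * (nonprimeVonMangoldtSum + 2))
    rw [scaleConst]
    linarith

theorem HasMertensCancellation.exists_abs_largestPrimeMean_range_le {f : ℕ → ℝ} {C : ℝ}
    (hf : HasMertensCancellation f C) :
    ∃ C' : ℝ, 0 ≤ C' ∧ ∀ t w : ℝ, 1 ≤ t → 1 ≤ w → log w ≤ exp t → ∀ T : ℕ,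
      |largestPrimeMean f (range T) w| ≤ C' * t / (1 + log w) := by
  have := hf.nonneg
  have := dilationConst_pos
  have := scaleConst_nonneg
  set B := 2 * C + (2 * C + 21) * (4 * dilationConst + 60)
  refine ⟨(B + 1) * scaleConst, by positivity, fun t w ht hw hexp T ↦ ?_⟩
  obtain ⟨i, hi, hinv, hdensity⟩ := exists_scale ht hw hexp
  calc |largestPrimeMean f (range T) w| ≤ B * (1 / i) + smoothDensity (2 ^ i) w := by
        rw [mul_one_div]
        exact hf.abs_largestPrimeMean_range_le hw hi T
    _ ≤ B * (scaleConst * t / (1 + log w)) + scaleConst * t / (1 + log w) := by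
        gcongr
    _ = (B + 1) * scaleConst * t / (1 + log w) := by ring

/-! ### Summation over the largest prime factor -/

theorem two_le_log_and_one_le_log_log {x : ℝ} (hx : 16 ≤ x) : 2.77 ≤ log x ∧ 1 ≤ log (log x) := by
  have hlog16 : log 16 = 4 * log 2 := by
    rw [show (16 : ℝ) = 2 ^ 4 by norm_num, log_pow, Nat.cast_ofNat]
  have hlog : 2.77 ≤ log x := by linarith [log_two_gt_d9, log_le_log (by norm_num) hx]
  exact ⟨hlog, (le_log_iff_exp_le (by linarith)).2 (by linarith [exp_one_lt_d9])⟩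

theorem sum_one_div_mul_one_div_sub_le (n : ℕ) :
    ∑ i ∈ Ico 1 n, 1 / (i : ℝ) * (1 / (n - i : ℕ)) ≤ 2 / n * (1 + log n) := by
  have hpartial : ∀ i ∈ Ico 1 n,
      1 / (i : ℝ) * (1 / (n - i : ℕ)) = 1 / n * (1 / (i : ℝ) + 1 / (n - i : ℕ)) := by
    intro i hi
    obtain ⟨hi1, hin⟩ := mem_Ico.1 hi
    have hi0 : (i : ℝ) ≠ 0 := Nat.cast_ne_zero.2 (by omega)
    have hni : ((n - i : ℕ) : ℝ) ≠ 0 := Nat.cast_ne_zero.2 (by omega)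
    have hn0 : (n : ℝ) ≠ 0 := Nat.cast_ne_zero.2 (by omega)
    rw [div_add_div _ _ hi0 hni, one_mul, mul_one, Nat.cast_sub hin.le, sub_add_cancel]
    rw [Nat.cast_sub hin.le] at hni
    field_simp
  have hharmonic : ∑ i ∈ Ico 1 n, 1 / (i : ℝ) ≤ 1 + log n := by
    refine le_trans ?_ (harmonic_le_one_add_log n)
    rw [harmonic_eq_sum_Icc, Rat.cast_sum]
    simp only [one_div, Rat.cast_inv, Rat.cast_natCast]
    exact sum_le_sum_of_subset_of_nonneg Ico_subset_Icc_self fun _ _ _ ↦ by positivity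
  have hreflect : ∑ i ∈ Ico 1 n, 1 / ((n - i : ℕ) : ℝ) = ∑ i ∈ Ico 1 n, 1 / (i : ℝ) := by
    refine sum_nbij' (n - ·) (n - ·) ?_ ?_ ?_ ?_ fun _ _ ↦ rfl <;> grind
  rw [sum_congr rfl hpartial, ← mul_sum, sum_add_distrib, hreflect, ← two_mul]
  calc _ = 2 / (n : ℝ) * ∑ i ∈ Ico 1 n, 1 / (i : ℝ) := by ring
    _ ≤ _ := by gcongr

theorem one_div_one_add_log_div_le {x : ℝ} {J q : ℕ} (hJ : 2 ^ J ≤ x) (hJ' : x < 2 ^ (J + 1))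
    (hq : 1 ≤ q) (hqx : q ≤ x) :
    1 / (1 + log (x / q)) ≤ 2 / ((J + 1 - Nat.log 2 q : ℕ) : ℝ) := by
  set i := Nat.log 2 q
  have hq0 : (0 : ℝ) < q := by exact_mod_cast hq
  have hqi : (q : ℝ) ≤ 2 ^ (i + 1) := by exact_mod_cast (Nat.lt_pow_succ_log_self one_lt_two q).le
  have hiJ : i ≤ J := by
    have hqJ : q < 2 ^ (J + 1) := by exact_mod_cast hqx.trans_lt hJ'
    exact Nat.lt_succ_iff.1 (Nat.log_lt_of_lt_pow (by omega) hqJ)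
  have hlog0 : 0 ≤ log (x / q) := log_nonneg ((one_le_div hq0).2 hqx)
  have hlog : (J - i : ℝ) * log 2 ≤ log 2 + log (x / q) := by
    have hlogJ := log_le_log (by positivity) hJ
    have hlogq := log_le_log hq0 hqi
    rw [log_pow] at hlogJ hlogq
    rw [log_div (hq0.trans_le hqx).ne' hq0.ne']
    push_cast at hlogq
    linarith
  have hiJ' : (i : ℝ) ≤ J := by exact_mod_cast hiJ
  rw [Nat.cast_sub (by omega), Nat.cast_add_one, div_le_div_iff₀ (by linarith) (by linarith)]
  nlinarith [log_two_gt_d9]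

theorem sum_prime_one_div_mul_one_div_le {x : ℝ} {J : ℕ} (hJ : 2 ^ J ≤ x)
    (hJ' : x < 2 ^ (J + 1)) :
    ∑ q ∈ Ioc 0 ⌊x⌋₊ with q.Prime, 1 / (q : ℝ) * (1 / (1 + log (x / q))) ≤
      84 / (J + 1 : ℕ) * (1 + log (J + 1 : ℕ)) := by
  have hx : 0 ≤ x := le_trans (by positivity) hJ
  calc ∑ q ∈ Ioc 0 ⌊x⌋₊ with q.Prime, 1 / (q : ℝ) * (1 / (1 + log (x / q)))
      ≤ ∑ q ∈ Ioc 0 ⌊x⌋₊ with q.Prime, 1 / (q : ℝ) * (2 / (J + 1 - Nat.log 2 q : ℕ)) := by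
        refine sum_le_sum fun q hq ↦ ?_
        obtain ⟨hq, -⟩ := mem_filter.1 hq
        obtain ⟨hq0, hqx⟩ := mem_Ioc.1 hq
        exact mul_le_mul_of_nonneg_left
          (one_div_one_add_log_div_le hJ hJ' hq0 ((Nat.le_floor_iff hx).1 hqx)) (by positivity)
    _ ≤ ∑ q ∈ Ico (2 ^ 1 : ℕ) (2 ^ (J + 1)) with q.Prime,
          1 / (q : ℝ) * (2 / (J + 1 - Nat.log 2 q : ℕ)) := by
        refine sum_le_sum_of_subset_of_nonneg (fun q hq ↦ ?_) fun _ _ _ ↦ by positivity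
        obtain ⟨hq, hprime⟩ := mem_filter.1 hq
        have hqx := (Nat.le_floor_iff hx).1 (mem_Ioc.1 hq).2
        exact mem_filter.2 ⟨mem_Ico.2 ⟨hprime.two_le, by exact_mod_cast hqx.trans_lt hJ'⟩, hprime⟩
    _ = ∑ i ∈ Ico 1 (J + 1), (∑ q ∈ dyadicPrimes i, 1 / (q : ℝ)) * (2 / (J + 1 - i : ℕ)) := by
        rw [sum_prime_eq_sum_dyadicPrimes _ (Nat.le_add_left 1 J)]
        refine sum_congr rfl fun i _ ↦ ?_
        rw [sum_mul]
        refine sum_congr rfl fun q hq ↦ ?_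
        have hq := mem_Ico.1 (mem_filter.1 hq).1
        rw [Nat.log_eq_of_pow_le_of_lt_pow hq.1 hq.2]
    _ ≤ ∑ i ∈ Ico 1 (J + 1), 42 * (1 / (i : ℝ) * (1 / (J + 1 - i : ℕ))) := by
        refine sum_le_sum fun i hi ↦ ?_
        calc _ ≤ 21 / (i : ℝ) * (2 / (J + 1 - i : ℕ)) := by
              gcongr
              exact sum_dyadicPrimes_one_div_le (mem_Ico.1 hi).1
          _ = 42 * (1 / (i : ℝ) * (1 / (J + 1 - i : ℕ))) := by ring
    _ ≤ 42 * (2 / (J + 1 : ℕ) * (1 + log (J + 1 : ℕ))) := by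
        rw [← mul_sum]
        gcongr
        exact sum_one_div_mul_one_div_sub_le (J + 1)
    _ = 84 / (J + 1 : ℕ) * (1 + log (J + 1 : ℕ)) := by ring

theorem sum_prime_one_div_mul_one_div_one_add_log_le {x : ℝ} (hx : 16 ≤ x) :
    ∑ q ∈ Ioc 0 ⌊x⌋₊ with q.Prime, 1 / (q : ℝ) * (1 / (1 + log (x / q))) ≤
      252 * log (log x) / log x := by
  obtain ⟨hlog, hloglog⟩ := two_le_log_and_one_le_log_log hx
  obtain ⟨J, hJ, hJ'⟩ := exists_nat_pow_near (by linarith : 1 ≤ x) one_lt_two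
  have hlogJ := log_le_log (by positivity) hJ
  have hlogJ' := log_le_log (by linarith) hJ'.le
  rw [log_pow] at hlogJ hlogJ'
  have hJ1 : log x ≤ (J + 1 : ℕ) := by nlinarith [log_two_lt_d9, (J + 1).cast_nonneg (α := ℝ)]
  have hJ2 : ((J + 1 : ℕ) : ℝ) ≤ 2 * log x := by
    push_cast
    nlinarith [log_two_gt_d9]
  have hlogJ1 : log (J + 1 : ℕ) ≤ 1 + log (log x) := by
    have := log_le_log (by linarith) hJ2
    rw [log_mul two_ne_zero (by linarith)] at this
    linarith [log_two_lt_d9]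
  calc _ ≤ 84 / (J + 1 : ℕ) * (1 + log (J + 1 : ℕ)) := sum_prime_one_div_mul_one_div_le hJ hJ'
    _ ≤ 84 / log x * (3 * log (log x)) := by
        gcongr
        linarith
    _ = 252 * log (log x) / log x := by ring

/-! ### The two largest prime factors -/

/-- The largest prime factor `P(n)`, with junk value `0` at `n = 0` and `n = 1`. -/
def largestPrimeFac (n : ℕ) : ℕ := n.primeFactors.sup id

/-- `q = P(n)` and `p = P₂(n)` are the two largest prime factors of `n`. -/
structure IsTopTwo (n q p : ℕ) : Prop where
  fst_mem : q ∈ n.primeFactors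
  snd_mem : p ∈ n.primeFactors
  snd_lt_fst : p < q
  eq_or_le : ∀ r ∈ n.primeFactors, r = q ∨ r ≤ p

theorem exists_isTopTwo {n : ℕ} (hn : 2 ≤ #n.primeFactors) :
    ∃ q, IsTopTwo n q (secondLargestPrimeFac n) := by
  have hmem (r : ℕ) : r ∈ (n.primeFactors.sort (· ≤ ·)).reverse ↔ r ∈ n.primeFactors := by
    rw [List.mem_reverse, mem_sort]
  have hsorted : (n.primeFactors.sort (· ≤ ·)).reverse.Pairwise (fun a b ↦ b < a) := by
    rw [List.pairwise_reverse]
    exact (sortedLT_sort _).pairwise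
  have hlength : 2 ≤ (n.primeFactors.sort (· ≤ ·)).reverse.length := by
    rwa [List.length_reverse, length_sort]
  rw [secondLargestPrimeFac]
  generalize (n.primeFactors.sort (· ≤ ·)).reverse = l at *
  match l, hlength with
  | q :: p :: l, _ =>
    simp only [List.pairwise_cons, List.mem_cons] at hsorted
    refine ⟨q, (hmem q).1 (by simp), (hmem p).1 (by simp), hsorted.1 p (Or.inl rfl), fun r hr ↦ ?_⟩
    rcases List.mem_cons.1 ((hmem r).2 hr) with hrq | hr'
    · exact Or.inl hrq
    · rcases List.mem_cons.1 hr' with hrp | hrl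
      · exact Or.inr hrp.le
      · exact Or.inr (hsorted.2.1 r hrl).le

namespace IsTopTwo

variable {n q p q' p' : ℕ}

theorem unique (h : IsTopTwo n q p) (h' : IsTopTwo n q' p') : q = q' ∧ p = p' := by
  have := h.eq_or_le q' h'.fst_mem
  have := h.eq_or_le p' h'.snd_mem
  have := h'.eq_or_le q h.fst_mem
  have := h'.eq_or_le p h.snd_mem
  have := h.snd_lt_fst
  have := h'.snd_lt_fst
  omega

theorem two_le_card (h : IsTopTwo n q p) : 2 ≤ #n.primeFactors := by
  rw [← card_pair h.snd_lt_fst.ne]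
  exact card_le_card (insert_subset h.snd_mem (singleton_subset_iff.2 h.fst_mem))

theorem secondLargestPrimeFac_eq (h : IsTopTwo n q p) : secondLargestPrimeFac n = p := by
  obtain ⟨q', h'⟩ := exists_isTopTwo h.two_le_card
  exact (h'.unique h).2

theorem largestPrimeFac_eq (h : IsTopTwo n q p) : largestPrimeFac n = q := by
  refine le_antisymm (Finset.sup_le fun r hr ↦ ?_) (le_sup (f := id) h.fst_mem)
  have := h.eq_or_le r hr
  have := h.snd_lt_fst
  simp only [id_eq]
  omega

end IsTopTwo

theorem dvd_and_div_mem_smoothNumbers_iff {n q p : ℕ} (hn : n ≠ 0) (hq : q.Prime) (hp : p.Prime)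
    (hpq : p < q) :
    q * p ∣ n ∧ n / (q * p) ∈ Nat.smoothNumbers (p + 1) ↔ IsTopTwo n q p ∧ ¬q ^ 2 ∣ n := by
  have hsq (hdvd : q * p ∣ n) : q ∣ n / (q * p) ↔ q ^ 2 ∣ n := by
    rw [Nat.dvd_div_iff_mul_dvd hdvd, mul_right_comm, ← sq]
    refine ⟨dvd_of_mul_right_dvd, fun h ↦ ?_⟩
    exact (((Nat.coprime_primes hq hp).2 hpq.ne').pow_left 2).mul_dvd_of_dvd_of_dvd h
      (dvd_of_mul_left_dvd hdvd)
  constructor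
  · rintro ⟨hdvd, hsmooth⟩
    rw [Nat.mem_smoothNumbers'] at hsmooth
    refine ⟨⟨?_, ?_, hpq, fun r hr ↦ ?_⟩, fun h ↦ ?_⟩
    · exact Nat.mem_primeFactors.2 ⟨hq, dvd_of_mul_right_dvd hdvd, hn⟩
    · exact Nat.mem_primeFactors.2 ⟨hp, dvd_of_mul_left_dvd hdvd, hn⟩
    · obtain ⟨hr, hrn, -⟩ := Nat.mem_primeFactors.1 hr
      rw [← Nat.div_mul_cancel hdvd, hr.dvd_mul, hr.dvd_mul, Nat.prime_dvd_prime_iff_eq hr hq,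
        Nat.prime_dvd_prime_iff_eq hr hp] at hrn
      rcases hrn with hrm | hrq | hrp
      · exact Or.inr (Nat.lt_succ_iff.1 (hsmooth r hr hrm))
      · exact Or.inl hrq
      · exact Or.inr hrp.le
    · have := hsmooth q hq ((hsq hdvd).2 h)
      omega
  · rintro ⟨htop, hnsq⟩
    have hdvd : q * p ∣ n := ((Nat.coprime_primes hq hp).2 hpq.ne').mul_dvd_of_dvd_of_dvd
      (Nat.dvd_of_mem_primeFactors htop.fst_mem) (Nat.dvd_of_mem_primeFactors htop.snd_mem)
    refine ⟨hdvd, Nat.mem_smoothNumbers'.2 fun r hr hrdvd ↦ Nat.lt_succ_iff.2 ?_⟩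
    have hrn := hrdvd.trans (Nat.div_dvd_of_dvd hdvd)
    refine (htop.eq_or_le r (Nat.mem_primeFactors.2 ⟨hr, hrn, hn⟩)).resolve_left ?_
    rintro rfl
    exact hnsq ((hsq hdvd).1 hrdvd)

theorem mem_and_dvd_and_div_mem_smoothNumbers_iff {N n q p : ℕ} :
    (q ∈ Ioc 0 N ∧ q.Prime) ∧ (p ∈ range q ∧ p.Prime) ∧ n ∈ Ioc 0 N ∧
        q * p ∣ n ∧ n / (q * p) ∈ Nat.smoothNumbers (p + 1) ↔
      n ∈ Ioc 0 N ∧ IsTopTwo n q p ∧ ¬q ^ 2 ∣ n := by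
  constructor
  · rintro ⟨⟨-, hq⟩, ⟨hpq, hp⟩, hn, hdvd⟩
    exact ⟨hn, (dvd_and_div_mem_smoothNumbers_iff (mem_Ioc.1 hn).1.ne' hq hp
      (mem_range.1 hpq)).1 hdvd⟩
  · rintro ⟨hn, h, hnsq⟩
    have hq := Nat.prime_of_mem_primeFactors h.fst_mem
    have hp := Nat.prime_of_mem_primeFactors h.snd_mem
    have hqn := Nat.le_of_mem_primeFactors h.fst_mem
    exact ⟨⟨mem_Ioc.2 ⟨hq.pos, hqn.trans (mem_Ioc.1 hn).2⟩, hq⟩,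
      ⟨mem_range.2 h.snd_lt_fst, hp⟩, hn, (dvd_and_div_mem_smoothNumbers_iff
        (mem_Ioc.1 hn).1.ne' hq hp h.snd_lt_fst).2 ⟨h, hnsq⟩⟩

theorem sum_secondLargestPrimeFac_of_not_sq_dvd (f : ℕ → ℝ) (x : ℝ) :
    ∑ n ∈ Ioc 0 ⌊x⌋₊ with 2 ≤ #n.primeFactors ∧ ¬largestPrimeFac n ^ 2 ∣ n,
        f (secondLargestPrimeFac n) =
      ∑ q ∈ Ioc 0 ⌊x⌋₊ with q.Prime, ∑ p ∈ range q with p.Prime,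
        f p * smoothCount p (x / (q * p : ℕ)) := by
  have hfibre : ∀ q ∈ {q ∈ Ioc 0 ⌊x⌋₊ | q.Prime}, ∀ p ∈ {p ∈ range q | p.Prime},
      f p * smoothCount p (x / (q * p : ℕ)) = ∑ n ∈ Ioc 0 ⌊x⌋₊ with
        q * p ∣ n ∧ n / (q * p) ∈ Nat.smoothNumbers (p + 1), f p := by
    intro q hq p hp
    rw [smoothCount_div_natCast p (Nat.mul_pos (mem_filter.1 hq).2.pos (mem_filter.1 hp).2.pos),
      sum_const, nsmul_eq_mul, mul_comm]
  rw [sum_congr rfl fun q hq ↦ sum_congr rfl (hfibre q hq)]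
  simp only [sum_sigma']
  symm
  refine sum_nbij (fun a ↦ a.2.2) ?_ ?_ ?_ ?_
  · rintro ⟨q, p, n⟩ ha
    simp only [mem_sigma, mem_filter, mem_and_dvd_and_div_mem_smoothNumbers_iff] at ha ⊢
    exact ⟨ha.1, ha.2.1.two_le_card, ha.2.1.largestPrimeFac_eq ▸ ha.2.2⟩
  · rintro ⟨q, p, n⟩ ha ⟨q', p', n'⟩ ha' (rfl : n = n')
    simp only [mem_coe, mem_sigma, mem_filter, mem_and_dvd_and_div_mem_smoothNumbers_iff] at ha ha'
    obtain ⟨rfl, rfl⟩ := ha.2.1.unique ha'.2.1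
    rfl
  · intro n hn
    simp only [mem_coe, mem_filter] at hn
    obtain ⟨q, h⟩ := exists_isTopTwo hn.2.1
    refine ⟨⟨q, secondLargestPrimeFac n, n⟩, ?_, rfl⟩
    simp only [mem_coe, mem_sigma, mem_filter, mem_and_dvd_and_div_mem_smoothNumbers_iff]
    exact ⟨hn.1, h, h.largestPrimeFac_eq ▸ hn.2.2⟩
  · rintro ⟨q, p, n⟩ ha
    simp only [mem_sigma, mem_filter, mem_and_dvd_and_div_mem_smoothNumbers_iff] at ha
    rw [ha.2.1.secondLargestPrimeFac_eq]

theorem sum_prime_mul_smoothCount_eq (f : ℕ → ℝ) {x : ℝ} (hx : x ≠ 0) {q : ℕ} (hq : q ≠ 0) :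
    ∑ p ∈ range q with p.Prime, f p * smoothCount p (x / (q * p : ℕ)) =
      x / q * largestPrimeMean f (range q) (x / q) := by
  have hq' : (q : ℝ) ≠ 0 := Nat.cast_ne_zero.2 hq
  rw [largestPrimeMean, mul_sum]
  refine sum_congr rfl fun p hp ↦ ?_
  have hcount := natCast_mul_smoothDensity_div (mem_filter.1 hp).2.ne_zero (x / q)
  rw [eq_div_iff (div_ne_zero hx hq'), div_div x] at hcount
  rw [div_div x, Nat.cast_mul, ← hcount]
  ring

theorem HasMertensCancellation.exists_abs_sum_of_not_sq_dvd_le {f : ℕ → ℝ} {C : ℝ}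
    (hf : HasMertensCancellation f C) :
    ∃ C' : ℝ, 0 ≤ C' ∧ ∀ x : ℝ, 16 ≤ x →
      |∑ n ∈ Ioc 0 ⌊x⌋₊ with 2 ≤ #n.primeFactors ∧ ¬largestPrimeFac n ^ 2 ∣ n,
        f (secondLargestPrimeFac n)| ≤ C' * x * log (log x) ^ 2 / log x := by
  obtain ⟨C', hC', hmean⟩ := hf.exists_abs_largestPrimeMean_range_le
  refine ⟨252 * C', by positivity, fun x hx ↦ ?_⟩
  obtain ⟨hlog, hloglog⟩ := two_le_log_and_one_le_log_log hx
  have hx0 : 0 < x := by linarith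
  rw [sum_secondLargestPrimeFac_of_not_sq_dvd]
  calc |∑ q ∈ Ioc 0 ⌊x⌋₊ with q.Prime, ∑ p ∈ range q with p.Prime,
        f p * smoothCount p (x / (q * p : ℕ))|
      ≤ ∑ q ∈ Ioc 0 ⌊x⌋₊ with q.Prime,
          x * (C' * log (log x)) * (1 / (q : ℝ) * (1 / (1 + log (x / q)))) := by
        refine (abs_sum_le_sum_abs _ _).trans (sum_le_sum fun q hq ↦ ?_)
        obtain ⟨hq, hprime⟩ := mem_filter.1 hq
        have hq0 : (0 : ℝ) < q := Nat.cast_pos.2 hprime.pos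
        have hq1 : (1 : ℝ) ≤ q := Nat.one_le_cast.2 hprime.one_le
        have hqx : (q : ℝ) ≤ x := (Nat.le_floor_iff hx0.le).1 (mem_Ioc.1 hq).2
        have hlogq : log (x / q) ≤ exp (log (log x)) := by
          rw [exp_log (by linarith)]
          exact log_le_log (by positivity) (div_le_self hx0.le hq1)
        rw [sum_prime_mul_smoothCount_eq f hx0.ne' hprime.ne_zero, abs_mul,
          abs_of_pos (div_pos hx0 hq0)]
        calc _ ≤ x / q * (C' * log (log x) / (1 + log (x / q))) := by
              gcongr
              exact hmean _ _ hloglog ((one_le_div hq0).2 hqx) hlogq q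
          _ = x * (C' * log (log x)) * (1 / (q : ℝ) * (1 / (1 + log (x / q)))) := by ring
    _ ≤ x * (C' * log (log x)) * (252 * log (log x) / log x) := by
        rw [← mul_sum]
        gcongr
        exact sum_prime_one_div_mul_one_div_one_add_log_le hx
    _ = 252 * C' * x * log (log x) ^ 2 / log x := by ring

/-! ### Exceptional integers -/

theorem sum_card_filter_sq_dvd_le {x : ℝ} (hx : 0 ≤ x) (z : ℕ) :
    (∑ d ∈ Ioo z (⌊x⌋₊ + 1), #{n ∈ Ioc 0 ⌊x⌋₊ | d ^ 2 ∣ n} : ℝ) ≤ x * (2 / (z + 1)) := by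
  calc (∑ d ∈ Ioo z (⌊x⌋₊ + 1), #{n ∈ Ioc 0 ⌊x⌋₊ | d ^ 2 ∣ n} : ℝ)
      ≤ ∑ d ∈ Ioo z (⌊x⌋₊ + 1), x * ((d : ℝ) ^ 2)⁻¹ := by
        refine sum_le_sum fun d _ ↦ ?_
        rw [Nat.Ioc_filter_dvd_card_eq_div, ← div_eq_mul_inv]
        refine Nat.cast_div_le.trans ?_
        rw [Nat.cast_pow]
        gcongr
        exact Nat.floor_le hx
    _ ≤ x * (2 / (z + 1)) := by
        rw [← mul_sum]
        gcongr
        exact sum_Ioo_inv_sq_le z (⌊x⌋₊ + 1)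

theorem mem_smoothNumbers_largestPrimeFac_add_one {n : ℕ} (hn : n ≠ 0) :
    n ∈ Nat.smoothNumbers (largestPrimeFac n + 1) :=
  Nat.mem_smoothNumbers'.2 fun _ hp hpn ↦
    Nat.lt_succ_iff.2 (le_sup (f := id) (Nat.mem_primeFactors.2 ⟨hp, hpn, hn⟩))

theorem card_largestPrimeFac_sq_dvd_le {x : ℝ} (hx : 0 ≤ x) (z : ℕ) :
    (#{n ∈ Ioc 0 ⌊x⌋₊ | largestPrimeFac n ^ 2 ∣ n} : ℝ) ≤ smoothCount z x + x * (2 / (z + 1)) := by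
  have hsubset : {n ∈ Ioc 0 ⌊x⌋₊ | largestPrimeFac n ^ 2 ∣ n} ⊆
      {n ∈ Ioc 0 ⌊x⌋₊ | n ∈ Nat.smoothNumbers (z + 1)} ∪
        (Ioo z (⌊x⌋₊ + 1)).biUnion fun d ↦ {n ∈ Ioc 0 ⌊x⌋₊ | d ^ 2 ∣ n} := by
    intro n hn
    obtain ⟨hn, hdvd⟩ := mem_filter.1 hn
    have hn0 := (mem_Ioc.1 hn).1
    rcases le_or_gt (largestPrimeFac n) z with hz | hz
    · exact mem_union_left _ (mem_filter.2 ⟨hn, Nat.smoothNumbers_mono (Nat.succ_le_succ hz)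
        (mem_smoothNumbers_largestPrimeFac_add_one hn0.ne')⟩)
    · have hle : largestPrimeFac n ≤ n :=
        (Nat.le_self_pow two_ne_zero _).trans (Nat.le_of_dvd hn0 hdvd)
      exact mem_union_right _ (mem_biUnion.2 ⟨largestPrimeFac n,
        mem_Ioo.2 ⟨hz, Nat.lt_succ_iff.2 (hle.trans (mem_Ioc.1 hn).2)⟩, mem_filter.2 ⟨hn, hdvd⟩⟩)
  calc (#{n ∈ Ioc 0 ⌊x⌋₊ | largestPrimeFac n ^ 2 ∣ n} : ℝ)
      ≤ smoothCount z x + (∑ d ∈ Ioo z (⌊x⌋₊ + 1), #{n ∈ Ioc 0 ⌊x⌋₊ | d ^ 2 ∣ n} : ℝ) := by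
        exact_mod_cast (card_le_card hsubset).trans ((card_union_le _ _).trans
          (Nat.add_le_add_left card_biUnion_le _))
    _ ≤ smoothCount z x + x * (2 / (z + 1)) := by
        gcongr
        exact sum_card_filter_sq_dvd_le hx z

theorem card_largestPrimeFac_sq_dvd_le_mul_log_log {x : ℝ} (hx : 16 ≤ x) :
    (#{n ∈ Ioc 0 ⌊x⌋₊ | largestPrimeFac n ^ 2 ∣ n} : ℝ) ≤
      3 * scaleConst * x * log (log x) / log x := by
  obtain ⟨hlog, hloglog⟩ := two_le_log_and_one_le_log_log hx
  have hx0 : 0 < x := by linarith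
  have := scaleConst_nonneg
  obtain ⟨i, hi, hinv, hdensity⟩ := exists_scale hloglog (by linarith : 1 ≤ x)
    (exp_log (by linarith : 0 < log x)).ge
  have : (0 : ℝ) < i := Nat.cast_pos.2 hi
  have hi2 : (i : ℝ) ≤ (2 ^ i : ℕ) + 1 := by
    exact_mod_cast Nat.lt_two_pow_self.le.trans (Nat.le_succ _)
  calc (#{n ∈ Ioc 0 ⌊x⌋₊ | largestPrimeFac n ^ 2 ∣ n} : ℝ)
      ≤ smoothCount (2 ^ i) x + x * (2 / ((2 ^ i : ℕ) + 1)) :=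
        card_largestPrimeFac_sq_dvd_le hx0.le (2 ^ i)
    _ ≤ x * smoothDensity (2 ^ i) x + x * (2 / i) := by
        rw [smoothDensity, mul_div_cancel₀ _ hx0.ne']
        gcongr
    _ = x * smoothDensity (2 ^ i) x + x * (2 * (1 / i)) := by ring
    _ ≤ x * (scaleConst * log (log x) / (1 + log x)) +
          x * (2 * (scaleConst * log (log x) / (1 + log x))) := by
        gcongr
    _ ≤ x * (scaleConst * log (log x) / log x) + x * (2 * (scaleConst * log (log x) / log x)) := by
        gcongr <;> linarith
    _ = 3 * scaleConst * x * log (log x) / log x := by ring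

theorem card_prime_le {x : ℝ} (hx : 16 ≤ x) :
    (#{p ∈ Ioc 0 ⌊x⌋₊ | p.Prime} : ℝ) ≤ 5 * x / log x := by
  obtain ⟨hlog, -⟩ := two_le_log_and_one_le_log_log hx
  have hx0 : 0 < x := by linarith
  have hcount : #{p ∈ Ioc 0 ⌊x⌋₊ | p.Prime} = Nat.primeCounting ⌊x⌋₊ := by
    rw [← Nat.primesLE_card_eq_primeCounting]
    congr 1
    ext p
    simp only [mem_filter, mem_Ioc, Nat.mem_primesLE]
    exact ⟨fun h ↦ ⟨h.1.2, h.2⟩, fun h ↦ ⟨⟨h.2.pos, h.1⟩, h.2⟩⟩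
  have hlog4 : log 4 ≤ 1.4 := by
    rw [show (4 : ℝ) = 2 ^ 2 by norm_num, log_pow]
    push_cast
    linarith [log_two_lt_d9]
  have hsqrt : √x ≤ 2 * x / log x := by
    have := log_le_sub_one_of_pos (sqrt_pos.2 hx0)
    rw [log_sqrt hx0.le] at this
    rw [le_div_iff₀ (by linarith)]
    nlinarith [sqrt_pos.2 hx0, mul_self_sqrt hx0.le]
  calc (#{p ∈ Ioc 0 ⌊x⌋₊ | p.Prime} : ℝ) ≤ log 4 * x / log √x + √x := by
        rw [hcount]
        exact Chebyshev.pi_le_log4_mul_div (by linarith)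
    _ ≤ 1.4 * x / (log x / 2) + 2 * x / log x := by
        rw [log_sqrt hx0.le]
        gcongr
    _ = 4.8 * x / log x := by ring
    _ ≤ 5 * x / log x := by
        gcongr
        norm_num

theorem eq_one_or_prime_or_sq_dvd {n : ℕ} (hn : n ≠ 0) (hcard : #n.primeFactors < 2) :
    n = 1 ∨ n.Prime ∨ largestPrimeFac n ^ 2 ∣ n := by
  by_cases hone : n = 1
  · exact Or.inl hone
  have hpos : #n.primeFactors ≠ 0 := card_ne_zero.2 (Nat.nonempty_primeFactors.2 (by omega))
  obtain ⟨p, m, hp, hm, rfl⟩ := (isPrimePow_nat_iff n).1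
    (isPrimePow_iff_card_primeFactors_eq_one.2 (by omega))
  have hlargest : largestPrimeFac (p ^ m) = p := by
    rw [largestPrimeFac, Nat.primeFactors_prime_pow hm.ne' hp, sup_singleton, id_eq]
  rcases Nat.lt_or_ge 1 m with hm2 | hm1
  · exact Or.inr (Or.inr (hlargest.symm ▸ pow_dvd_pow p hm2))
  · obtain rfl : m = 1 := by omega
    exact Or.inr (Or.inl (by rwa [pow_one]))

theorem card_card_primeFactors_lt_two_le (N : ℕ) :
    #{n ∈ Ioc 0 N | #n.primeFactors < 2} ≤
      1 + #{p ∈ Ioc 0 N | p.Prime} + #{n ∈ Ioc 0 N | largestPrimeFac n ^ 2 ∣ n} := by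
  have hsubset : {n ∈ Ioc 0 N | #n.primeFactors < 2} ⊆
      {1} ∪ {p ∈ Ioc 0 N | p.Prime} ∪ {n ∈ Ioc 0 N | largestPrimeFac n ^ 2 ∣ n} := by
    intro n hn
    obtain ⟨hn, hcard⟩ := mem_filter.1 hn
    simp only [mem_union, mem_singleton, mem_filter, hn, true_and, or_assoc]
    exact eq_one_or_prime_or_sq_dvd (mem_Ioc.1 hn).1.ne' hcard
  refine (card_le_card hsubset).trans ((card_union_le _ _).trans ?_)
  gcongr
  exact (card_union_le _ _).trans_eq (by rw [card_singleton])

theorem div_log_le_and_one_le_mul_log_log_sq_div_log {x : ℝ} (hx : 16 ≤ x) :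
    x / log x ≤ x * log (log x) ^ 2 / log x ∧ 1 ≤ x * log (log x) ^ 2 / log x := by
  obtain ⟨hlog, hloglog⟩ := two_le_log_and_one_le_log_log hx
  have hone : 1 ≤ x / log x := by
    rw [one_le_div (by linarith)]
    linarith [log_le_sub_one_of_pos (by linarith : 0 < x)]
  have hsq : x / log x ≤ x * log (log x) ^ 2 / log x := by
    gcongr
    exact le_mul_of_one_le_right (by linarith) (one_le_pow₀ hloglog)
  exact ⟨hsq, hone.trans hsq⟩

theorem card_card_primeFactors_lt_two_le_mul_log_log_sq {x : ℝ} (hx : 16 ≤ x) :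
    (#{n ∈ Ioc 0 ⌊x⌋₊ | #n.primeFactors < 2} : ℝ) ≤
      (6 + 3 * scaleConst) * x * log (log x) ^ 2 / log x := by
  have := scaleConst_nonneg
  obtain ⟨hlog, hloglog⟩ := two_le_log_and_one_le_log_log hx
  obtain ⟨hdiv, hone⟩ := div_log_le_and_one_le_mul_log_log_sq_div_log hx
  calc (#{n ∈ Ioc 0 ⌊x⌋₊ | #n.primeFactors < 2} : ℝ)
      ≤ 1 + #{p ∈ Ioc 0 ⌊x⌋₊ | p.Prime} + #{n ∈ Ioc 0 ⌊x⌋₊ | largestPrimeFac n ^ 2 ∣ n} := by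
        exact_mod_cast card_card_primeFactors_lt_two_le ⌊x⌋₊
    _ ≤ 1 + 5 * x / log x + 3 * scaleConst * x * log (log x) / log x := by
        gcongr
        · exact card_prime_le hx
        · exact card_largestPrimeFac_sq_dvd_le_mul_log_log hx
    _ ≤ x * log (log x) ^ 2 / log x + 5 * (x * log (log x) ^ 2 / log x) +
          3 * scaleConst * x * log (log x) ^ 2 / log x := by
        rw [mul_div_assoc 5]
        gcongr
        exact le_self_pow₀ hloglog two_ne_zero
    _ = (6 + 3 * scaleConst) * x * log (log x) ^ 2 / log x := by ring

theorem exists_abs_card_two_le_card_primeFactors_sub_le :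
    ∃ C : ℝ, 0 < C ∧ ∀ x : ℝ, 16 ≤ x →
      |(#{n ∈ Ioc 0 ⌊x⌋₊ | 2 ≤ #n.primeFactors} : ℝ) - x| ≤ C * x * log (log x) ^ 2 / log x := by
  have := scaleConst_nonneg
  refine ⟨7 + 3 * scaleConst, by positivity, fun x hx ↦ ?_⟩
  have hcard : (⌊x⌋₊ : ℝ) = #{n ∈ Ioc 0 ⌊x⌋₊ | 2 ≤ #n.primeFactors} +
      #{n ∈ Ioc 0 ⌊x⌋₊ | #n.primeFactors < 2} := by
    have := card_filter_add_card_filter_not (s := Ioc 0 ⌊x⌋₊) (fun n ↦ 2 ≤ #n.primeFactors)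
    simp only [not_le, Nat.card_Ioc, Nat.sub_zero] at this
    exact_mod_cast this.symm
  calc |(#{n ∈ Ioc 0 ⌊x⌋₊ | 2 ≤ #n.primeFactors} : ℝ) - x|
      ≤ 1 + #{n ∈ Ioc 0 ⌊x⌋₊ | #n.primeFactors < 2} := by
        have := Nat.floor_le (by linarith : 0 ≤ x)
        have := Nat.lt_floor_add_one x
        rw [abs_le]
        constructor <;> linarith [Nat.cast_nonneg (α := ℝ) #{n ∈ Ioc 0 ⌊x⌋₊ | #n.primeFactors < 2}]
    _ ≤ x * log (log x) ^ 2 / log x + (6 + 3 * scaleConst) * x * log (log x) ^ 2 / log x :=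
        add_le_add (div_log_le_and_one_le_mul_log_log_sq_div_log hx).2
          (card_card_primeFactors_lt_two_le_mul_log_log_sq hx)
    _ = (7 + 3 * scaleConst) * x * log (log x) ^ 2 / log x := by ring

theorem HasMertensCancellation.exists_abs_sum_secondLargestPrimeFac_le {f : ℕ → ℝ} {C : ℝ}
    (hf : HasMertensCancellation f C) :
    ∃ C' : ℝ, 0 ≤ C' ∧ ∀ x : ℝ, 16 ≤ x →
      |∑ n ∈ Ioc 0 ⌊x⌋₊ with 2 ≤ #n.primeFactors, f (secondLargestPrimeFac n)| ≤
        C' * x * log (log x) ^ 2 / log x := by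
  obtain ⟨C', hC', hmain⟩ := hf.exists_abs_sum_of_not_sq_dvd_le
  have := scaleConst_nonneg
  refine ⟨C' + 3 * scaleConst, by positivity, fun x hx ↦ ?_⟩
  obtain ⟨hlog, hloglog⟩ := two_le_log_and_one_le_log_log hx
  have hsq : |∑ n ∈ Ioc 0 ⌊x⌋₊ with 2 ≤ #n.primeFactors ∧ largestPrimeFac n ^ 2 ∣ n,
      f (secondLargestPrimeFac n)| ≤ #{n ∈ Ioc 0 ⌊x⌋₊ | largestPrimeFac n ^ 2 ∣ n} := by
    refine (abs_sum_le_sum_abs _ _).trans ((sum_le_card_nsmul _ _ 1 fun n _ ↦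
      hf.abs_le_one _).trans ?_)
    rw [nsmul_one]
    exact Nat.cast_le.2 (card_le_card (monotone_filter_right _ fun _ _ h ↦ h.2))
  rw [← sum_filter_add_sum_filter_not _ (fun n ↦ largestPrimeFac n ^ 2 ∣ n), filter_filter,
    filter_filter, add_comm]
  calc _ ≤ C' * x * log (log x) ^ 2 / log x + 3 * scaleConst * x * log (log x) / log x :=
        (abs_add_le _ _).trans (add_le_add (hmain x hx)
          (hsq.trans (card_largestPrimeFac_sq_dvd_le_mul_log_log hx)))
    _ ≤ C' * x * log (log x) ^ 2 / log x + 3 * scaleConst * x * log (log x) ^ 2 / log x := by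
        gcongr
        exact le_self_pow₀ hloglog two_ne_zero
    _ = (C' + 3 * scaleConst) * x * log (log x) ^ 2 / log x := by ring

theorem card_secondLargestPrimeFac_modEq (k ℓ N : ℕ) :
    (#{n ∈ Icc 1 N | 2 ≤ #n.primeFactors ∧ secondLargestPrimeFac n ≡ ℓ [MOD k]} : ℝ) =
      ∑ n ∈ Ioc 0 N with 2 ≤ #n.primeFactors, residueDiscrepancy k ℓ (secondLargestPrimeFac n) +
        #{n ∈ Ioc 0 N | 2 ≤ #n.primeFactors} / (k.totient : ℝ) := by
  simp only [residueDiscrepancy, sum_sub_distrib, sum_const, nsmul_eq_mul, mul_one_div,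
    sub_add_cancel, sum_boole, filter_filter]
  rfl

/-- Uniform distribution of `P₂(n)` in the reduced residue classes mod `k`:
for fixed `k ≥ 2` and `1 ≤ ℓ < k` with `gcd(ℓ,k) = 1`, there is `C > 0` with
`|#{n ≤ x : ω(n) ≥ 2, P₂(n) ≡ ℓ (mod k)} − x/φ(k)| ≤ C x (log log x)² / log x`
for all `x ≥ 16`. -/
theorem second_largest_prime_factor_uniform_distribution
    (k ℓ : ℕ) (hk : 2 ≤ k) (hl : 1 ≤ ℓ) (hlk : ℓ < k) (hgcd : Nat.gcd ℓ k = 1) :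
    ∃ C > (0 : ℝ), ∀ x : ℝ, 16 ≤ x →
      |(((Finset.Icc 1 ⌊x⌋₊).filter
            (fun n => 2 ≤ n.primeFactors.card ∧ secondLargestPrimeFac n ≡ ℓ [MOD k])).card : ℝ)
          - x / (Nat.totient k : ℝ)|
        ≤ C * x * (Real.log (Real.log x)) ^ 2 / Real.log x := by
  have : NeZero k := ⟨by omega⟩
  obtain ⟨C₀, hcancel⟩ := exists_hasMertensCancellation_residueDiscrepancy hgcd
  obtain ⟨C₁, hC₁, hsum⟩ := hcancel.exists_abs_sum_secondLargestPrimeFac_le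
  obtain ⟨C₂, hC₂, hcard⟩ := exists_abs_card_two_le_card_primeFactors_sub_le
  refine ⟨C₁ + C₂, by positivity, fun x hx ↦ ?_⟩
  have htotient : (1 : ℝ) ≤ k.totient := Nat.one_le_cast.2 (Nat.totient_pos.2 (by omega))
  rw [card_secondLargestPrimeFac_modEq, add_sub_assoc, ← sub_div]
  calc _ ≤ C₁ * x * log (log x) ^ 2 / log x + C₂ * x * log (log x) ^ 2 / log x := by
        refine (abs_add_le _ _).trans (add_le_add (hsum x hx) (le_trans ?_ (hcard x hx)))
        rw [abs_div, abs_of_pos (by linarith : (0 : ℝ) < k.totient)]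
        exact div_le_self (abs_nonneg _) htotient
    _ = (C₁ + C₂) * x * log (log x) ^ 2 / log x := by ring
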